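/- arXiv:1702.00385 — 3 statements merged into one kernel-verified Lean document; each statement's English description precedes it below -/
import Mathlib

section
/- Braiding of adjacent Artin generators (part of Theorem 6.1): Let k ≥ 3, r ≥ 2, n = rk. For every index j ∈ ZMod n there exist a sign ε_j ∈ {+1, −1} and a Laurent monomial M_j in the frozen minors (both independent of v) such that for every generic configuration v : ZMod n → (Fin k → ℂ), the j-th vector of σ_1(σ_2(σ_1(v))) equals ε_j · M_j(v) · (the j-th vector of σ_2(σ_1(σ_2(v)))). In other words, σ_1 ∘ σ_2 ∘ σ_1 and σ_2 ∘ σ_1 ∘ σ_2 agree componentwise up to signs and Laurent monomials in the frozen minors. -/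
open scoped BigOperators

noncomputable section

/-- Determinant of the `k × k` matrix whose `b`-th column is `c b`. -/
def colDet {k : ℕ} (c : Fin k → Fin k → ℂ) : ℂ :=
  Matrix.det (Matrix.of fun a b => c b a)

/-- The frozen Plücker minor `Δ_m(v)`, on the `k` cyclically consecutive
columns starting at `m`. -/
def frozen (k n : ℕ) (v : ZMod n → Fin k → ℂ) (m : ZMod n) : ℂ :=
  colDet (fun b : Fin k => v (m + ((b : ℕ) : ZMod n)))

/-- A configuration is generic if all frozen minors are nonzero. -/
def Generic (k n : ℕ) (v : ZMod n → Fin k → ℂ) : Prop :=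
  ∀ m : ZMod n, frozen k n v m ≠ 0

/-- The Laurent monomial `∏_m Δ_m(v)^(e m)` in the frozen minors. -/
def laurent (k n : ℕ) (e : Fin n → ℤ) (v : ZMod n → Fin k → ℂ) : ℂ :=
  ∏ m : Fin n, frozen k n v ((m : ℕ) : ZMod n) ^ e m

/-- The Artin generator `σ_i` acting on configurations. -/
def artin (k n i : ℕ) (v : ZMod n → Fin k → ℂ) : ZMod n → Fin k → ℂ :=
  fun j =>
    if (ZMod.val j) % k = i % k then v (j + 1)
    else if (ZMod.val j) % k = (i + 1) % k then
      (colDet (fun b : Fin k =>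
          if (b : ℕ) = 0 then v (j - 1) else v (j + ((b : ℕ) : ZMod n)))) • v j
        - (frozen k n v j) • v (j - 1)
    else v j

/-- `artinComp k n i v = σ_i (σ_{i-1} (⋯ (σ_1 v)))`. -/
def artinComp (k n : ℕ) : ℕ → (ZMod n → Fin k → ℂ) → ZMod n → Fin k → ℂ
  | 0, v => v
  | m + 1, v => artin k n (m + 1) (artinComp k n m v)

/-- `artinCompRev k n i v = σ_1 (σ_2 (⋯ (σ_i v)))`. -/
def artinCompRev (k n : ℕ) : ℕ → (ZMod n → Fin k → ℂ) → ZMod n → Fin k → ℂ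
  | 0, v => v
  | m + 1, v => artinCompRev k n m (artin k n (m + 1) v)

/-- The degree-one Grassmann–Cayley meet
`(a_1 ⋯ a_p) ∩ (b_1 ⋯ b_q)` (intended for `p + q = k + 1`):
`Σ_{i=1}^{p} (−1)^{p−i} · det(a_1 | ⋯ | â_i | ⋯ | a_p | b_1 | ⋯ | b_q) · a_i`. -/
def gcMeet {k p q : ℕ} (a : Fin p → Fin k → ℂ) (b : Fin q → Fin k → ℂ) : Fin k → ℂ :=
  ∑ i : Fin p, ((-1 : ℂ) ^ (p - 1 - (i : ℕ)) *
    colDet (fun c : Fin k =>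
      if hc : (c : ℕ) < p - 1 then
        (if hci : (c : ℕ) < (i : ℕ) then a ⟨(c : ℕ), Nat.lt_trans hci i.isLt⟩
         else a ⟨(c : ℕ) + 1, by have := i.isLt; omega⟩)
      else if hq : (c : ℕ) - (p - 1) < q then b ⟨(c : ℕ) - (p - 1), hq⟩ else 0)) • a i

/-!
Fix a position `q` in the residue class `i` and put `q' = q + k`. Modulo the span of the columns
`v_{q+3}, …, v_{q+k-1}`, which neither generator changes, the vectors
`a, b, c = v_q, v_{q+1}, v_{q+2}` and `a', b', c' = v_{q'}, v_{q'+1}, v_{q'+2}` are points of a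
projective plane, whose determinant form satisfies the Grassmann–Plücker exchange relation.
Up to scalars, `σ_i` sends `(a, b, c)` to `(b, ca' ∩ ab, c)` and `σ_{i+1}` sends it to
`(a, c, a'b' ∩ bc)`. Both braid words therefore send `(a, b, c)` to `(c, a'b' ∩ bc, T)`, where `T`
is the vector in the span of `a, b, c` which represents the point `a'`. What remains is to compare
the scalars, and the exchange relation factors them into frozen minors.
-/

section PluckerForm

variable {R V : Type*} [CommRing R] [AddCommGroup V] [Module R V]

/-- A Plücker form: an alternating trilinear form satisfying the Grassmann–Plücker exchange
relation, i.e. `p` may be expanded along `a, b, c` by Cramer's rule in the first argument.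
It plays the role of the determinant of a projective plane whose points are vectors of `V`. -/
structure IsPluckerForm (ω : V →ₗ[R] V →ₗ[R] V →ₗ[R] R) : Prop where
  isAlt : ω.IsAlt
  isAlt_apply (x : V) : (ω x).IsAlt
  exchange (p a b c s t : V) :
    ω a b c * ω p s t = ω p b c * ω a s t - ω p a c * ω b s t + ω p a b * ω c s t

/-- The meet of the lines `pq` and `ab`, as a vector in the span of `a` and `b`. -/
def lineMeet (ω : V →ₗ[R] V →ₗ[R] V →ₗ[R] R) (p q a b : V) : V :=
  ω p q a • b - ω p q b • a

/-- The representative in the span of `a, b, c` of the point `p` of the plane: the Cramer expansion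
of `ω a b c • p`. -/
def planeMeet (ω : V →ₗ[R] V →ₗ[R] V →ₗ[R] R) (p a b c : V) : V :=
  ω p b c • a - ω p a c • b + ω p a b • c

theorem lineMeet_smul_left (ω : V →ₗ[R] V →ₗ[R] V →ₗ[R] R) (r : R) (p q a b : V) :
    lineMeet ω (r • p) q a b = r • lineMeet ω p q a b := by
  simp only [lineMeet, map_smul, LinearMap.smul_apply, smul_eq_mul, mul_smul, smul_sub]

theorem lineMeet_smul_third (ω : V →ₗ[R] V →ₗ[R] V →ₗ[R] R) (r : R) (p q a b : V) :
    lineMeet ω p q (r • a) b = r • lineMeet ω p q a b := by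
  simp only [lineMeet, map_smul, smul_eq_mul]
  module

namespace IsPluckerForm

variable {ω : V →ₗ[R] V →ₗ[R] V →ₗ[R] R}

theorem swap_left (h : IsPluckerForm ω) (x y z : V) : ω x y z = -ω y x z := by
  rw [← h.isAlt.neg y x, LinearMap.neg_apply]

theorem swap_right (h : IsPluckerForm ω) (x y z : V) : ω x y z = -ω x z y :=
  ((h.isAlt_apply x).neg z y).symm

theorem self_left (h : IsPluckerForm ω) (x y : V) : ω x x y = 0 := by
  rw [h.isAlt.self_eq_zero, LinearMap.zero_apply]

theorem self_right (h : IsPluckerForm ω) (x y : V) : ω y x x = 0 :=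
  (h.isAlt_apply y).self_eq_zero x

theorem rotate (h : IsPluckerForm ω) (x y z : V) : ω x y z = ω y z x := by
  rw [h.swap_left, h.swap_right, neg_neg]

theorem self_outer (h : IsPluckerForm ω) (x y : V) : ω x y x = 0 := by
  rw [h.rotate, h.self_right]

theorem apply_planeMeet (h : IsPluckerForm ω) (p a b c s t : V) :
    ω (planeMeet ω p a b c) s t = ω a b c * ω p s t := by
  simp only [planeMeet, map_add, map_sub, map_smul, LinearMap.add_apply, LinearMap.sub_apply,
    LinearMap.smul_apply, smul_eq_mul, h.exchange p a b c s t]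

theorem lineMeet_eq_smul_sub_planeMeet (h : IsPluckerForm ω) (p a b c : V) :
    lineMeet ω c p a b = ω p a b • c - planeMeet ω p a b c := by
  simp only [lineMeet, planeMeet, h.rotate c p]
  module

theorem apply_right_lineMeet (h : IsPluckerForm ω) (p x y b c : V) :
    ω p y (lineMeet ω p x b c) = ω p b c * ω p x y := by
  simp only [lineMeet, map_sub, map_smul, smul_eq_mul]
  have hy := h.exchange y p b c p x
  simp only [h.self_left, h.rotate y p, h.rotate b p, h.rotate c p] at hy
  linear_combination ω p x b * h.swap_right p y c - ω p x c * h.swap_right p y b - hy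

theorem apply_left_lineMeet (h : IsPluckerForm ω) (p q a b : V) :
    ω (lineMeet ω p q a b) p b = ω p q b * ω p a b := by
  simp only [lineMeet, map_sub, map_smul, LinearMap.sub_apply, LinearMap.smul_apply, smul_eq_mul,
    h.self_outer, h.swap_left a p]
  ring

theorem lineMeet_planeMeet_left (h : IsPluckerForm ω) (p a b c x y z : V) :
    lineMeet ω (planeMeet ω p a b c) x y z = ω a b c • lineMeet ω p x y z := by
  simp only [lineMeet, h.apply_planeMeet, mul_smul, smul_sub]

theorem lineMeet_smul_sub_smul (h : IsPluckerForm ω) (β γ : R) (p x y z : V) :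
    lineMeet ω x (β • x - γ • p) y z = γ • lineMeet ω p x y z := by
  simp only [lineMeet, map_sub, map_smul, LinearMap.sub_apply, LinearMap.smul_apply, smul_eq_mul,
    h.self_left, h.swap_left x p]
  module

theorem lineMeet_lineMeet (h : IsPluckerForm ω) (p x a b c : V) :
    lineMeet ω p x (lineMeet ω c p a b) c = ω p x c • planeMeet ω p a b c := by
  have h0 : ω p x (planeMeet ω p a b c) = 0 := by
    rw [← h.rotate, h.apply_planeMeet, h.self_left, mul_zero]
  rw [lineMeet, h.lineMeet_eq_smul_sub_planeMeet, map_sub, map_smul, h0]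
  module

theorem planeMeet_lineMeet (h : IsPluckerForm ω) (p x a b c : V) :
    planeMeet ω p a c (lineMeet ω p x b c) = ω p x c • planeMeet ω p a b c := by
  simp only [planeMeet, lineMeet, map_sub, map_smul, smul_eq_mul, h.self_right,
    h.swap_right p c b]
  module

end IsPluckerForm

end PluckerForm

section TailForm

variable {R V : Type*} [CommRing R] [AddCommGroup V] [Module R V]

theorem sum_map_removeNth_smul_eq_zero {ι N : Type*} [Fintype ι] [AddCommGroup N] [Module R N]
    {k : ℕ} (e : Module.Basis ι R V) (hk : Fintype.card ι ≤ k) (g : V [⋀^Fin k]→ₗ[R] R)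
    (φ : V →ₗ[R] N) (w : Fin (k + 1) → V) :
    ∑ i : Fin (k + 1), (-1 : ℤ) ^ (i : ℕ) • g (i.removeNth w) • φ (w i) = 0 := by
  let f : V →ₗ[R] V [⋀^Fin k]→ₗ[R] N :=
    { toFun := fun x => g.smulRight (φ x)
      map_add' := fun x y => by ext; simp
      map_smul' := fun c x => by ext; simp [smul_comm c] }
  -- An alternating map in more variables than the rank vanishes.
  have hf : AlternatingMap.alternatizeUncurryFin f = 0 := by
    refine e.ext_alternating fun u hu => ?_
    have := Fintype.card_le_of_injective u hu
    rw [Fintype.card_fin] at this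
    omega
  have := AlternatingMap.alternatizeUncurryFin_apply f w
  rw [hf] at this
  simpa [f] using this.symm

theorem removeNth_zero_vecCons {α : Type*} {k : ℕ} (x : α) (w : Fin k → α) :
    (0 : Fin (k + 1)).removeNth (Matrix.vecCons x w) = w :=
  rfl

theorem removeNth_succ_vecCons {α : Type*} {k : ℕ} (i : Fin (k + 1)) (x : α)
    (w : Fin (k + 1) → α) :
    i.succ.removeNth (Matrix.vecCons x w) = Matrix.vecCons x (i.removeNth w) := by
  ext j
  cases j using Fin.cases <;> simp [Fin.removeNth]

/-- The trilinear form `(x, y, z) ↦ g (x, y, z, D)`. -/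
def tailForm {m : ℕ} (g : V [⋀^Fin (m + 3)]→ₗ[R] R) (D : Fin m → V) :
    V →ₗ[R] V →ₗ[R] V →ₗ[R] R :=
  (AlternatingMap.curryLeftLinearMap ∘ₗ g.curryLeft).compr₂
    { toFun := fun f =>
        { toFun := fun z => f (Matrix.vecCons z D)
          map_add' := fun x y => f.map_vecCons_add D x y
          map_smul' := fun c x => f.map_vecCons_smul D c x }
      map_add' := fun _ _ => rfl
      map_smul' := fun _ _ => rfl }

theorem tailForm_apply {m : ℕ} (g : V [⋀^Fin (m + 3)]→ₗ[R] R) (D : Fin m → V) (x y z : V) :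
    tailForm g D x y z = g (Matrix.vecCons x (Matrix.vecCons y (Matrix.vecCons z D))) :=
  rfl

theorem tailForm_tail_left {m : ℕ} (g : V [⋀^Fin (m + 3)]→ₗ[R] R) (D : Fin m → V) (i : Fin m)
    (y z : V) : tailForm g D (D i) y z = 0 := by
  refine g.map_eq_zero_of_eq _ (i := 0) (j := i.succ.succ.succ) ?_ ?_
  · simp
  · exact (Fin.succ_ne_zero _).symm

theorem isPluckerForm_tailForm {m : ℕ} (e : Module.Basis (Fin (m + 3)) R V)
    (g : V [⋀^Fin (m + 3)]→ₗ[R] R) (D : Fin m → V) : IsPluckerForm (tailForm g D) where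
  isAlt x := LinearMap.ext fun z =>
    DFunLike.congr_fun (g.curryLeft_same x) (Matrix.vecCons z D)
  isAlt_apply x y := DFunLike.congr_fun ((g.curryLeft x).curryLeft_same y) D
  exchange p a b c s t := by
    -- Cramer's relation among `p, a, b, c, D`; the terms that keep a column of `D` twice vanish.
    have h := sum_map_removeNth_smul_eq_zero e (by simp) g ((tailForm g D).flip s |>.flip t)
      (Matrix.vecCons p (Matrix.vecCons a (Matrix.vecCons b (Matrix.vecCons c D))))
    simp only [Fin.sum_univ_succ, Matrix.cons_val_succ, Matrix.cons_val_zero, Fin.val_succ,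
      Fin.val_zero, removeNth_zero_vecCons, removeNth_succ_vecCons, LinearMap.flip_apply,
      tailForm_tail_left, mul_zero, Finset.sum_const_zero, ← tailForm_apply, pow_succ, pow_zero,
      zsmul_eq_mul, smul_eq_mul] at h
    push_cast at h
    linear_combination h

end TailForm

section Snoc

variable {R V : Type*} [CommRing R] [AddCommGroup V] [Module R V]

theorem vecCons_snoc {α : Type*} {k : ℕ} (x : α) (D : Fin k → α) (z : α) :
    Matrix.vecCons x (Fin.snoc D z : Fin (k + 1) → α) =
      (Fin.snoc (Matrix.vecCons x D) z : Fin (k + 2) → α) :=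
  Fin.cons_snoc_eq_snoc_cons x D z

theorem snoc_apply_nat {α : Type*} {k : ℕ} (w : ℕ → α) :
    (Fin.snoc (fun b : Fin k => w b) (w k) : Fin (k + 1) → α) = fun b : Fin (k + 1) => w b := by
  funext b
  cases b using Fin.lastCases <;> simp

theorem map_snoc_eq_smul_map_vecCons {k : ℕ} (g : V [⋀^Fin (k + 1)]→ₗ[R] R) (D : Fin k → V)
    (z : V) : g (Fin.snoc D z : Fin (k + 1) → V) = (-1) ^ k * g (Matrix.vecCons z D) := by
  rw [← Fin.insertNth_last', AlternatingMap.map_insertNth]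
  simp [zsmul_eq_mul]

variable {m : ℕ} (g : V [⋀^Fin (m + 3)]→ₗ[R] R) (D : Fin m → V) (x y z : V)

theorem map_vecCons_vecCons_snoc_eq_tailForm :
    g (Matrix.vecCons x (Matrix.vecCons y (Fin.snoc D z : Fin (m + 1) → V))) =
      (-1) ^ m * tailForm g D z x y := by
  rw [vecCons_snoc, vecCons_snoc, map_snoc_eq_smul_map_vecCons, tailForm_apply, pow_add,
    neg_one_sq, mul_one]

theorem map_vecCons_snoc_snoc_eq_tailForm :
    g (Matrix.vecCons x (Fin.snoc (Fin.snoc D y : Fin (m + 1) → V) z : Fin (m + 2) → V)) =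
      tailForm g D y z x := by
  rw [vecCons_snoc, map_snoc_eq_smul_map_vecCons, map_vecCons_vecCons_snoc_eq_tailForm,
    ← mul_assoc, ← pow_add, Even.neg_one_pow ⟨m + 1, by ring⟩, one_mul]

theorem map_snoc_snoc_snoc_eq_tailForm :
    g (Fin.snoc (Fin.snoc (Fin.snoc D x : Fin (m + 1) → V) y : Fin (m + 2) → V) z) =
      (-1) ^ m * tailForm g D x y z := by
  rw [map_snoc_eq_smul_map_vecCons, map_vecCons_snoc_snoc_eq_tailForm, pow_add, neg_one_sq, mul_one]

end Snoc

section Minors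

theorem colDet_eq_detRowAlternating {k : ℕ} (c : Fin k → Fin k → ℂ) :
    colDet c = Matrix.detRowAlternating c :=
  (Matrix.det_transpose _).symm

/-- The frozen minor `Δ_j(v)` with its first column replaced by `x`. -/
def headMinor (k n : ℕ) (v : ZMod n → Fin k → ℂ) (j : ZMod n) (x : Fin k → ℂ) : ℂ :=
  colDet fun b : Fin k => if (b : ℕ) = 0 then x else v (j + ((b : ℕ) : ZMod n))

theorem headMinor_self (k n : ℕ) (v : ZMod n → Fin k → ℂ) (j : ZMod n) :
    headMinor k n v j (v j) = frozen k n v j := by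
  unfold headMinor frozen
  congr 1
  funext b
  split_ifs with hb <;> simp [hb]

theorem headMinor_succ (k n : ℕ) (v : ZMod n → Fin (k + 1) → ℂ) (j : ZMod n)
    (x : Fin (k + 1) → ℂ) : headMinor (k + 1) n v j x = Matrix.detRowAlternating
      (Matrix.vecCons x fun b : Fin k => v (j + (b + 1 : ℕ))) := by
  rw [headMinor, colDet_eq_detRowAlternating]
  congr 1
  funext b
  cases b using Fin.cases <;> simp

variable {m n : ℕ}

/-- The determinant form `(x, y, z) ↦ det(x | y | z | D)` whose tail `D` consists of the `m` columns
`v_{q+3}, …, v_{q+m+2}`, for `k = m + 3`. -/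
def windowForm (v : ZMod n → Fin (m + 3) → ℂ) (q : ZMod n) :
    (Fin (m + 3) → ℂ) →ₗ[ℂ] (Fin (m + 3) → ℂ) →ₗ[ℂ] (Fin (m + 3) → ℂ) →ₗ[ℂ] ℂ :=
  tailForm Matrix.detRowAlternating fun t : Fin m => v (q + (t + 3 : ℕ))

theorem isPluckerForm_windowForm (v : ZMod n → Fin (m + 3) → ℂ) (q : ZMod n) :
    IsPluckerForm (windowForm v q) :=
  isPluckerForm_tailForm (Pi.basisFun ℂ _) _ _

theorem frozen_eq_windowForm (v : ZMod n → Fin (m + 3) → ℂ) (q : ZMod n) :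
    frozen (m + 3) n v q = windowForm v q (v q) (v (q + 1)) (v (q + 2)) := by
  rw [← headMinor_self, headMinor_succ, windowForm, tailForm_apply]
  congr 2
  funext b
  refine Fin.cases (by simp) (fun b => ?_) b
  refine Fin.cases (by simp) (fun b => ?_) b
  simp [add_assoc]

theorem headMinor_add_one (v : ZMod n → Fin (m + 3) → ℂ) (q : ZMod n) (x : Fin (m + 3) → ℂ) :
    headMinor (m + 3) n v (q + 1) x =
      (-1) ^ m * windowForm v q (v (q + 2)) (v (q + (m + 3 : ℕ))) x := by
  rw [(isPluckerForm_windowForm v q).rotate, windowForm, ← map_vecCons_vecCons_snoc_eq_tailForm,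
    snoc_apply_nat fun t => v (q + (t + 3 : ℕ)), headMinor_succ]
  congr 2
  funext b
  refine Fin.cases (by norm_num [add_assoc]) (fun b => congrArg v ?_) b
  push_cast [Fin.val_succ]
  ring

theorem headMinor_add_two (v : ZMod n → Fin (m + 3) → ℂ) (q : ZMod n) (x : Fin (m + 3) → ℂ) :
    headMinor (m + 3) n v (q + 2) x =
      windowForm v q (v (q + (m + 3 : ℕ))) (v (q + (m + 3 : ℕ) + 1)) x := by
  have h : q + (m + 3 : ℕ) + 1 = q + (m + 1 + 3 : ℕ) := by
    push_cast
    ring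
  rw [windowForm, ← map_vecCons_snoc_snoc_eq_tailForm, h,
    snoc_apply_nat fun t => v (q + (t + 3 : ℕ)), snoc_apply_nat fun t => v (q + (t + 3 : ℕ)),
    headMinor_succ]
  congr 2
  funext b
  congr 1
  push_cast
  ring

theorem frozen_add_three (v : ZMod n → Fin (m + 3) → ℂ) (q : ZMod n) :
    frozen (m + 3) n v (q + 3) = (-1) ^ m * windowForm v q (v (q + (m + 3 : ℕ)))
      (v (q + (m + 3 : ℕ) + 1)) (v (q + (m + 3 : ℕ) + 2)) := by
  have h1 : q + (m + 3 : ℕ) + 1 = q + (m + 1 + 3 : ℕ) := by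
    push_cast
    ring
  have h2 : q + (m + 3 : ℕ) + 2 = q + (m + 2 + 3 : ℕ) := by
    push_cast
    ring
  rw [windowForm, ← map_snoc_snoc_snoc_eq_tailForm, h1, h2,
    snoc_apply_nat fun t => v (q + (t + 3 : ℕ)), snoc_apply_nat fun t => v (q + (t + 3 : ℕ)),
    snoc_apply_nat fun t => v (q + (t + 3 : ℕ)), frozen, colDet_eq_detRowAlternating]
  congr 1
  funext b
  congr 1
  push_cast
  ring

end Minors

section Residues

variable {k n : ℕ}

theorem val_add_natCast_modEq [NeZero n] (hkn : k ∣ n) (q : ZMod n) (t : ℕ) :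
    (q + t).val ≡ q.val + t [MOD k] := by
  have h : (q + t).val ≡ q.val + t [MOD n] := by
    rw [ZMod.val_add, ZMod.val_natCast]
    exact (Nat.mod_modEq _ _).trans ((Nat.mod_modEq _ _).add_left _)
  exact h.of_dvd hkn

theorem val_add_self_modEq [NeZero n] (hkn : k ∣ n) {i : ℕ} {q : ZMod n} (hq : q.val ≡ i [MOD k]) :
    (q + (k : ℕ)).val ≡ i [MOD k] :=
  ((val_add_natCast_modEq hkn q k).trans Nat.add_modEq_right).trans hq

theorem val_add_natCast_modEq_iff [NeZero n] (hkn : k ∣ n) {i t u : ℕ} {q : ZMod n}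
    (hq : q.val ≡ i [MOD k]) (ht : t < k) (hu : u < k) :
    (q + t).val ≡ i + u [MOD k] ↔ t = u := by
  have hqt : (q + t).val ≡ i + t [MOD k] := (val_add_natCast_modEq hkn q t).trans (hq.add_right t)
  refine ⟨fun h => ?_, fun h => h ▸ hqt⟩
  exact ((hqt.symm.trans h).add_left_cancel').eq_of_lt_of_lt ht hu

theorem exists_eq_add_natCast_and_modEq [NeZero n] (hkn : k ∣ n) (i : ℕ) (j : ZMod n) :
    ∃ (q : ZMod n) (t : ℕ), q.val ≡ i [MOD k] ∧ t < k ∧ j = q + t := by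
  have : NeZero k := ⟨ne_zero_of_dvd_ne_zero (NeZero.ne n) hkn⟩
  obtain ⟨t, ht, htj⟩ : ∃ t < k, (t : ZMod k) = (j.val : ZMod k) - i :=
    ⟨_, ZMod.val_lt _, ZMod.natCast_zmod_val _⟩
  refine ⟨j - t, t, ?_, ht, (sub_add_cancel j _).symm⟩
  have h := val_add_natCast_modEq hkn (j - t) t
  rw [sub_add_cancel, ← ZMod.natCast_eq_natCast_iff] at h
  rw [← ZMod.natCast_eq_natCast_iff]
  push_cast at h
  linear_combination -h - htj

theorem artin_apply_of_modEq {i : ℕ} {j : ZMod n} (hj : j.val ≡ i [MOD k])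
    (v : ZMod n → Fin k → ℂ) : artin k n i v j = v (j + 1) :=
  if_pos hj

theorem artin_apply_of_not_modEq {i : ℕ} {j : ZMod n} (hj : ¬j.val ≡ i [MOD k])
    (hj' : ¬j.val ≡ i + 1 [MOD k]) (v : ZMod n → Fin k → ℂ) : artin k n i v j = v j :=
  (if_neg hj).trans (if_neg hj')

theorem artin_apply_of_modEq_succ {i : ℕ} {j : ZMod n} (hj : ¬j.val ≡ i [MOD k])
    (hj' : j.val ≡ i + 1 [MOD k]) (v : ZMod n → Fin k → ℂ) :
    artin k n i v j =
      headMinor k n v j (v (j - 1)) • v j - headMinor k n v j (v j) • v (j - 1) := by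
  rw [headMinor_self]
  exact (if_neg hj).trans (if_pos hj')

theorem artin_add_apply_add_natCast [NeZero n] (hkn : k ∣ n) {i t u : ℕ} {q : ZMod n}
    (hq : q.val ≡ i [MOD k]) (ht : t < k) (hu : u + 1 < k) (v : ZMod n → Fin k → ℂ) :
    artin k n (i + u) v (q + t) =
      if t = u then v (q + t + 1)
      else if t = u + 1 then
        headMinor k n v (q + t) (v (q + t - 1)) • v (q + t) -
          headMinor k n v (q + t) (v (q + t)) • v (q + t - 1)
      else v (q + t) := by
  have h := val_add_natCast_modEq_iff hkn hq ht (Nat.lt_of_succ_lt hu)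
  have h' := val_add_natCast_modEq_iff hkn hq ht hu
  split_ifs with htu htu'
  · exact artin_apply_of_modEq (h.2 htu) v
  · exact artin_apply_of_modEq_succ (mt h.1 htu) (h'.2 htu') v
  · exact artin_apply_of_not_modEq (mt h.1 htu) (mt h'.1 htu') v

end Residues

section Window

variable {m n : ℕ} [NeZero n] {i : ℕ} {q : ZMod n}

variable (hkn : m + 3 ∣ n) (hq : q.val ≡ i [MOD m + 3]) (v : ZMod n → Fin (m + 3) → ℂ)
include hkn hq

theorem artin_apply_base : artin (m + 3) n i v q = v (q + 1) := by
  simpa using artin_add_apply_add_natCast hkn hq (t := 0) (u := 0) (by lia) (by lia) v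

theorem artin_apply_base_add_one_eq_headMinor :
    artin (m + 3) n i v (q + 1) =
      headMinor (m + 3) n v (q + 1) (v q) • v (q + 1) - frozen (m + 3) n v (q + 1) • v q := by
  simpa [headMinor_self] using
    artin_add_apply_add_natCast hkn hq (t := 1) (u := 0) (by lia) (by lia) v

theorem artin_apply_base_add_one :
    artin (m + 3) n i v (q + 1) = (-1 : ℂ) ^ m •
      lineMeet (windowForm v q) (v (q + 2)) (v (q + (m + 3 : ℕ))) (v q) (v (q + 1)) := by
  rw [artin_apply_base_add_one_eq_headMinor hkn hq, ← headMinor_self, headMinor_add_one,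
    headMinor_add_one, lineMeet, mul_smul, mul_smul, smul_sub]

theorem artin_apply_base_add_two : artin (m + 3) n i v (q + 2) = v (q + 2) := by
  simpa using artin_add_apply_add_natCast hkn hq (t := 2) (u := 0) (by lia) (by lia) v

theorem artin_succ_apply_base : artin (m + 3) n (i + 1) v q = v q := by
  simpa using artin_add_apply_add_natCast hkn hq (t := 0) (u := 1) (by lia) (by lia) v

theorem artin_succ_apply_base_add_one : artin (m + 3) n (i + 1) v (q + 1) = v (q + 2) := by
  simpa [add_assoc, one_add_one_eq_two] using
    artin_add_apply_add_natCast hkn hq (t := 1) (u := 1) (by lia) (by lia) v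

theorem artin_succ_apply_base_add_two :
    artin (m + 3) n (i + 1) v (q + 2) =
      lineMeet (windowForm v q) (v (q + (m + 3 : ℕ))) (v (q + (m + 3 : ℕ) + 1)) (v (q + 1))
        (v (q + 2)) := by
  have h := artin_add_apply_add_natCast hkn hq (t := 2) (u := 1) (by lia) (by lia) v
  have h21 : q + 2 - 1 = q + 1 := by ring
  simpa [headMinor_add_two, lineMeet, h21] using h

theorem artin_apply_base_add_natCast {t : ℕ} (ht : 3 ≤ t) (ht' : t < m + 3) :
    artin (m + 3) n i v (q + t) = v (q + t) := by
  have h := artin_add_apply_add_natCast hkn hq ht' (u := 0) (by lia) v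
  rwa [if_neg (by lia), if_neg (by lia)] at h

theorem artin_succ_apply_base_add_natCast {t : ℕ} (ht : 3 ≤ t) (ht' : t < m + 3) :
    artin (m + 3) n (i + 1) v (q + t) = v (q + t) := by
  have h := artin_add_apply_add_natCast hkn hq ht' (u := 1) (by lia) v
  rwa [if_neg (by lia), if_neg (by lia)] at h

theorem windowForm_artin : windowForm (artin (m + 3) n i v) q = windowForm v q := by
  unfold windowForm
  congr 1
  funext t
  exact artin_apply_base_add_natCast hkn hq v (by lia) (by lia)

theorem windowForm_artin_succ : windowForm (artin (m + 3) n (i + 1) v) q = windowForm v q := by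
  unfold windowForm
  congr 1
  funext t
  exact artin_succ_apply_base_add_natCast hkn hq v (by lia) (by lia)

theorem frozen_artin_succ_add_one :
    frozen (m + 3) n (artin (m + 3) n (i + 1) v) (q + 1) =
      frozen (m + 3) n v (q + 1) * frozen (m + 3) n v (q + 2) := by
  have hω := isPluckerForm_windowForm v q
  simp only [← headMinor_self, headMinor_add_one, headMinor_add_two, windowForm_artin_succ hkn hq,
    artin_succ_apply_base_add_one hkn hq, artin_succ_apply_base_add_two hkn hq,
    artin_succ_apply_base hkn (val_add_self_modEq hkn hq), hω.apply_left_lineMeet,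
    hω.rotate (v (q + 2)) (v (q + (m + 3 : ℕ)))]
  ring

theorem frozen_artin_succ_add_two :
    frozen (m + 3) n (artin (m + 3) n (i + 1) v) (q + 2) =
      frozen (m + 3) n v (q + 1) * frozen (m + 3) n v (q + 3) := by
  have hω := isPluckerForm_windowForm v q
  have hq' := val_add_self_modEq hkn hq
  rw [frozen_add_three]
  simp only [← headMinor_self, headMinor_add_one, headMinor_add_two, windowForm_artin_succ hkn hq,
    artin_succ_apply_base_add_two hkn hq, artin_succ_apply_base hkn hq',
    artin_succ_apply_base_add_one hkn hq', hω.apply_right_lineMeet,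
    hω.rotate (v (q + 2)) (v (q + (m + 3 : ℕ)))]
  have hs : (-1 : ℂ) ^ m * (-1) ^ m = 1 := pow_mul_pow_eq_one m (by norm_num)
  linear_combination -(windowForm v q (v (q + (m + 3 : ℕ))) (v (q + 1)) (v (q + 2)) *
    windowForm v q (v (q + (m + 3 : ℕ))) (v (q + (m + 3 : ℕ) + 1)) (v (q + (m + 3 : ℕ) + 2))) * hs

theorem artin_succ_artin_apply_base_add_two :
    artin (m + 3) n (i + 1) (artin (m + 3) n i v) (q + 2) =
      ((-1) ^ m * frozen (m + 3) n v (q + (m + 3 : ℕ) + 1) * frozen (m + 3) n v (q + 2)) •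
        planeMeet (windowForm v q) (v (q + (m + 3 : ℕ))) (v q) (v (q + 1)) (v (q + 2)) := by
  have hω := isPluckerForm_windowForm v q
  have hq' := val_add_self_modEq hkn hq
  have hmeet := artin_succ_apply_base_add_two hkn hq (artin (m + 3) n i v)
  rw [windowForm_artin hkn hq, artin_apply_base hkn hq', artin_apply_base_add_one hkn hq,
    artin_apply_base_add_two hkn hq, lineMeet_smul_third] at hmeet
  rw [hmeet, artin_apply_base_add_one_eq_headMinor hkn hq', hω.lineMeet_smul_sub_smul,
    hω.lineMeet_lineMeet, ← headMinor_self _ _ v (q + 2), headMinor_add_two, smul_smul, smul_smul,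
    mul_assoc]

theorem artin_braid_apply_base :
    artin (m + 3) n i (artin (m + 3) n (i + 1) (artin (m + 3) n i v)) q =
      artin (m + 3) n (i + 1) (artin (m + 3) n i (artin (m + 3) n (i + 1) v)) q := by
  rw [artin_apply_base hkn hq, artin_succ_apply_base_add_one hkn hq,
    artin_apply_base_add_two hkn hq, artin_succ_apply_base hkn hq, artin_apply_base hkn hq,
    artin_succ_apply_base_add_one hkn hq]

theorem artin_braid_apply_base_add_one :
    artin (m + 3) n i (artin (m + 3) n (i + 1) (artin (m + 3) n i v)) (q + 1) =
      (frozen (m + 3) n v (q + (m + 3 : ℕ) + 1) * frozen (m + 3) n v q *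
          frozen (m + 3) n v (q + 2)) •
        artin (m + 3) n (i + 1) (artin (m + 3) n i (artin (m + 3) n (i + 1) v)) (q + 1) := by
  have hω := isPluckerForm_windowForm v q
  have hq' := val_add_self_modEq hkn hq
  have hs : (-1 : ℂ) ^ m * (-1) ^ m = 1 := pow_mul_pow_eq_one m (by norm_num)
  rw [artin_apply_base_add_one hkn hq, windowForm_artin_succ hkn hq, windowForm_artin hkn hq,
    artin_succ_artin_apply_base_add_two hkn hq, artin_succ_apply_base hkn hq',
    artin_succ_apply_base hkn hq, artin_succ_apply_base_add_one hkn hq, artin_apply_base hkn hq',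
    artin_apply_base hkn hq, artin_apply_base_add_two hkn hq, lineMeet_smul_left,
    hω.lineMeet_planeMeet_left, ← frozen_eq_windowForm,
    artin_succ_apply_base_add_one hkn hq, artin_apply_base_add_two hkn hq,
    artin_succ_apply_base_add_two hkn hq, smul_smul, smul_smul]
  congr 1
  linear_combination (frozen (m + 3) n v (q + (m + 3 : ℕ) + 1) * frozen (m + 3) n v q *
    frozen (m + 3) n v (q + 2)) * hs

theorem artin_braid_apply_base_add_two :
    artin (m + 3) n (i + 1) (artin (m + 3) n i (artin (m + 3) n (i + 1) v)) (q + 2) =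
      (frozen (m + 3) n v (q + (m + 3 : ℕ) + 2) * frozen (m + 3) n v (q + 1) *
          frozen (m + 3) n v (q + 3)) •
        artin (m + 3) n i (artin (m + 3) n (i + 1) (artin (m + 3) n i v)) (q + 2) := by
  have hω := isPluckerForm_windowForm v q
  have hq' := val_add_self_modEq hkn hq
  rw [artin_apply_base_add_two hkn hq, artin_succ_artin_apply_base_add_two hkn hq,
    artin_succ_artin_apply_base_add_two hkn hq, frozen_artin_succ_add_one hkn hq',
    frozen_artin_succ_add_two hkn hq, windowForm_artin_succ hkn hq,
    artin_succ_apply_base hkn hq', artin_succ_apply_base hkn hq,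
    artin_succ_apply_base_add_one hkn hq, artin_succ_apply_base_add_two hkn hq,
    hω.planeMeet_lineMeet, ← headMinor_self _ _ v (q + 2), headMinor_add_two, smul_smul, smul_smul]
  congr 1
  ring

theorem artin_braid_apply_base_add_natCast {t : ℕ} (ht : 3 ≤ t) (ht' : t < m + 3) :
    artin (m + 3) n i (artin (m + 3) n (i + 1) (artin (m + 3) n i v)) (q + t) =
      artin (m + 3) n (i + 1) (artin (m + 3) n i (artin (m + 3) n (i + 1) v)) (q + t) := by
  simp only [artin_apply_base_add_natCast hkn hq _ ht ht',
    artin_succ_apply_base_add_natCast hkn hq _ ht ht']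

end Window

section FrozenMonomial

variable {k n : ℕ}

/-- A function of the configuration that agrees on generic configurations with a fixed Laurent
monomial in the frozen minors. -/
def IsFrozenMonomial (k n : ℕ) (f : (ZMod n → Fin k → ℂ) → ℂ) : Prop :=
  ∃ e : Fin n → ℤ, ∀ v, Generic k n v → f v = laurent k n e v

namespace IsFrozenMonomial

theorem one : IsFrozenMonomial k n 1 :=
  ⟨0, fun v _ => by simp [laurent]⟩

theorem mul {f g : (ZMod n → Fin k → ℂ) → ℂ} (hf : IsFrozenMonomial k n f)
    (hg : IsFrozenMonomial k n g) : IsFrozenMonomial k n (f * g) := by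
  obtain ⟨e, he⟩ := hf
  obtain ⟨e', he'⟩ := hg
  refine ⟨e + e', fun v hv => ?_⟩
  simp [he v hv, he' v hv, laurent, zpow_add₀ (hv _), Finset.prod_mul_distrib]

theorem inv {f : (ZMod n → Fin k → ℂ) → ℂ} (hf : IsFrozenMonomial k n f) :
    IsFrozenMonomial k n f⁻¹ := by
  obtain ⟨e, he⟩ := hf
  exact ⟨-e, fun v hv => by simp [he v hv, laurent]⟩

theorem ne_zero {f : (ZMod n → Fin k → ℂ) → ℂ} (hf : IsFrozenMonomial k n f)
    {v : ZMod n → Fin k → ℂ} (hv : Generic k n v) : f v ≠ 0 := by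
  obtain ⟨e, he⟩ := hf
  rw [he v hv]
  exact Finset.prod_ne_zero_iff.2 fun m _ => zpow_ne_zero _ (hv _)

end IsFrozenMonomial

theorem isFrozenMonomial_frozen [NeZero n] (p : ZMod n) :
    IsFrozenMonomial k n fun v => frozen k n v p := by
  refine ⟨Pi.single ⟨p.val, p.val_lt⟩ 1, fun v _ => ?_⟩
  rw [laurent, Finset.prod_eq_single ⟨p.val, p.val_lt⟩ _ (by simp)]
  · simp
  · intro b _ hb
    simp [Pi.single_eq_of_ne hb]

theorem exists_isFrozenMonomial_artin_braid [NeZero n] (hk : 3 ≤ k) (hkn : k ∣ n) (i : ℕ)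
    (j : ZMod n) :
    ∃ f, IsFrozenMonomial k n f ∧ ∀ v, Generic k n v →
      artin k n i (artin k n (i + 1) (artin k n i v)) j =
        f v • artin k n (i + 1) (artin k n i (artin k n (i + 1) v)) j := by
  obtain ⟨m, rfl⟩ := Nat.exists_eq_add_of_le' hk
  obtain ⟨q, t, hq, ht, rfl⟩ := exists_eq_add_natCast_and_modEq hkn i j
  have hF := isFrozenMonomial_frozen (k := m + 3) (n := n)
  obtain rfl | rfl | rfl | ht3 : t = 0 ∨ t = 1 ∨ t = 2 ∨ 3 ≤ t := by lia
  · exact ⟨1, .one, fun v _ => by simpa using artin_braid_apply_base hkn hq v⟩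
  · exact ⟨_, ((hF (q + (m + 3 : ℕ) + 1)).mul (hF q)).mul (hF (q + 2)), fun v _ => by
      simpa using artin_braid_apply_base_add_one hkn hq v⟩
  · have hf := ((hF (q + (m + 3 : ℕ) + 2)).mul (hF (q + 1))).mul (hF (q + 3))
    refine ⟨_, hf.inv, fun v hv => ?_⟩
    rw [Pi.inv_apply, eq_inv_smul_iff₀ (hf.ne_zero hv)]
    simpa using (artin_braid_apply_base_add_two hkn hq v).symm
  · exact ⟨1, .one, fun v _ => by simpa using artin_braid_apply_base_add_natCast hkn hq v ht3 ht⟩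

end FrozenMonomial

theorem adjacent_artin_generators_quasi_braided_general {k n : ℕ} [NeZero n] (hk : 3 ≤ k)
    (hkn : k ∣ n) (i : ℕ) (j : ZMod n) :
    ∃ e : Fin n → ℤ, ∀ v : ZMod n → Fin k → ℂ, Generic k n v →
      artin k n i (artin k n (i + 1) (artin k n i v)) j =
        laurent k n e v • artin k n (i + 1) (artin k n i (artin k n (i + 1) v)) j := by
  obtain ⟨f, ⟨e, he⟩, hf⟩ := exists_isFrozenMonomial_artin_braid hk hkn i j
  exact ⟨e, fun v hv => by rw [hf v hv, he v hv]⟩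

/-- Braiding of adjacent Artin generators (part of Theorem 6.1):
`σ_1 ∘ σ_2 ∘ σ_1` and `σ_2 ∘ σ_1 ∘ σ_2` agree componentwise up to signs and
Laurent monomials in the frozen minors. -/
theorem adjacent_artin_generators_quasi_braided
    (k r n : ℕ) (hk : 3 ≤ k) (hr : 2 ≤ r) (hn : n = r * k) (j : ZMod n) :
    ∃ (ε : ℂ) (e : Fin n → ℤ), (ε = 1 ∨ ε = -1) ∧
      ∀ v : ZMod n → Fin k → ℂ, Generic k n v →
        artin k n 1 (artin k n 2 (artin k n 1 v)) j
          = (ε * laurent k n e v) • artin k n 2 (artin k n 1 (artin k n 2 v)) j := by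
  have : NeZero n := ⟨by rw [hn]; positivity⟩
  obtain ⟨e, he⟩ := adjacent_artin_generators_quasi_braided_general hk ⟨r, by lia⟩ 1 j
  exact ⟨1, e, Or.inl rfl, by simpa only [one_mul] using he⟩

end
end

section
/- Proposition 8.2 (extra relation for n = 2k): Let k ≥ 2 and n = 2k. For a k-element subset I ⊆ ZMod n let Δ_I(v) denote the determinant of the k×k matrix whose columns are the vectors v_i for i ∈ I, listed in increasing order of their representatives in {0,1,…,n−1}, and let I−1 := {i−1 : i ∈ I}. Then for every k-element subset I ⊆ ZMod n there exist a sign ε ∈ {+1, −1} and a Laurent monomial M in the frozen minors (both independent of v) such that for every generic configuration v : ZMod n → (Fin k → ℂ), Δ_I((σ_1 ∘ σ_2 ∘ ⋯ ∘ σ_{k−1})(v)) = ε · M(v) · Δ_{I−1}(v). In other words, on Gr(k,2k) the composition σ_1 ∘ ⋯ ∘ σ_{k−1} acts as the inverse cyclic shift up to signs and Laurent monomials in the frozen minors. -/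
open scoped BigOperators

noncomputable section

/-!
Let `q` run over the multiples of `k`, and let `φ_q` be the linear form dual to `v_q` in the basis
`v_q, …, v_{q+k-1}`. The composition `σ_1 ∘ ⋯ ∘ σ_{k-1}` drags each `v_q` to the left past
`v_{q-1}, …, v_{q-k+1}`. Every vector that `v_q` passes is projected along `v_q` onto `ker φ_q` and
rescaled by a signed monomial in the frozen minors: in the two minors occurring in `σ_i`, all
columns but the first lie in `ker φ_q`.

For `n = 2k` the only multiples of `k` are `0` and `k`, and the single linear map
`g : y ↦ y - φ_0(y) v_0 - φ_k(y) v_k` performs both projections, up to scalars. It also exchanges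
the lines spanned by `v_0` and `v_k`, which is where the two dragged vectors end up. So every minor
is multiplied by a signed monomial times `det g = -φ_0(v_k) φ_k(v_0)`, again a signed monomial.
-/

open scoped Matrix

theorem prod_fin_ite_lt_reflect {M : Type*} [CommMonoid M] (a : ℕ → M) {t m : ℕ} (htm : t ≤ m) :
    (∏ j : Fin m, if (j : ℕ) < t then a (t - 1 - j) else 1) = ∏ s : Fin t, a s := by
  have hfilter : (Finset.range m).filter (· < t) = Finset.range t := by
    ext j
    simp only [Finset.mem_filter, Finset.mem_range]
    lia
  rw [Fin.prod_univ_eq_prod_range (fun j => if j < t then a (t - 1 - j) else 1) m,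
    ← Finset.prod_filter, hfilter, Finset.prod_range_reflect, Finset.prod_range]

section Determinants

variable {R : Type*} [CommRing R]

theorem det_cons_succAbove {m : ℕ} (w : Fin (m + 1) → Fin (m + 1) → R) (i : Fin (m + 1)) :
    (Matrix.of (Fin.cons (w i) fun j => w (i.succAbove j))).det
      = (-1) ^ (i : ℕ) * (Matrix.of w).det := by
  have hperm : Matrix.of (Fin.cons (w i) fun j => w (i.succAbove j))
      = (Matrix.of w).submatrix i.cycleRange.symm id := by
    ext b a
    refine Fin.cases ?_ (fun j => ?_) b <;> simp
  rw [hperm, Matrix.det_permute, Equiv.Perm.sign_symm, Fin.sign_cycleRange]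
  simp

theorem det_cons_smul_sub_smul {m : ℕ} (x : Fin (m + 1) → R) (w : Fin m → Fin (m + 1) → R)
    (r μ : Fin m → R) :
    (Matrix.of (Fin.cons x fun j => r j • (w j - μ j • x))).det
      = (∏ j, r j) * (Matrix.of (Fin.cons x w)).det := by
  have hscale : (Matrix.of (Fin.cons x fun j => r j • (w j - μ j • x))).det
      = (∏ j, r j) * (Matrix.of (Fin.cons x fun j => w j - μ j • x)).det := by
    have h := Matrix.det_mul_column (Fin.cons 1 r)
      (Matrix.of (Fin.cons x fun j => w j - μ j • x) : Matrix (Fin (m + 1)) (Fin (m + 1)) R)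
    rw [Fin.prod_cons, one_mul] at h
    rw [← h]
    congr 1
    ext b a
    refine Fin.cases ?_ (fun j => ?_) b <;> simp
  rw [hscale, Matrix.det_eq_of_forall_row_eq_smul_add_const (Fin.cons 0 fun j => -μ j) 0 rfl]
  refine Fin.cases ?_ fun j => ?_ <;> simp [sub_eq_add_neg]

theorem det_updateRow_of_mulVec_eq_single {ι : Type*} [Fintype ι] [DecidableEq ι]
    {A : Matrix ι ι R} {φ : ι → R} {i : ι} (hφ : A *ᵥ φ = Pi.single i 1) (y : ι → R) :
    (A.updateRow i y).det = (φ ⬝ᵥ y) * A.det :=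
  calc (A.updateRow i y).det
      = y ⬝ᵥ (A.adjugate *ᵥ Pi.single i 1) := by
        rw [← Matrix.cramer_transpose_apply, Matrix.cramer_eq_adjugate_mulVec,
          ← Matrix.adjugate_transpose, Matrix.mulVec_transpose, Matrix.dotProduct_mulVec,
          dotProduct_single_one]
    _ = (φ ⬝ᵥ y) * A.det := by
        rw [← hφ, Matrix.mulVec_mulVec, Matrix.adjugate_mul, Matrix.smul_mulVec, Matrix.one_mulVec,
          dotProduct_smul, smul_eq_mul, mul_comm, dotProduct_comm]

theorem det_one_sub_vecMulVec_sub_vecMulVec {ι : Type*} [Fintype ι] [DecidableEq ι]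
    (x y φ ψ : ι → R) :
    (1 - Matrix.vecMulVec x φ - Matrix.vecMulVec y ψ).det
      = (1 - φ ⬝ᵥ x) * (1 - ψ ⬝ᵥ y) - (φ ⬝ᵥ y) * (ψ ⬝ᵥ x) := by
  have hrank : 1 - Matrix.vecMulVec x φ - Matrix.vecMulVec y ψ
      = 1 - (Matrix.of ![x, y])ᵀ * Matrix.of ![φ, ψ] := by
    ext i j
    simp [Matrix.mul_apply, Matrix.vecMulVec_apply, Fin.sum_univ_two, sub_sub]
  rw [hrank, Matrix.det_one_sub_mul_comm, Matrix.det_fin_two]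
  simp only [Matrix.sub_apply, Matrix.one_apply, Matrix.mul_apply, Matrix.transpose_apply,
    Matrix.of_apply, dotProduct]
  simp

end Determinants

section ColDet

variable {k : ℕ}

theorem colDet_eq_det_of (c : Fin k → Fin k → ℂ) : colDet c = (Matrix.of c).det :=
  (Matrix.det_transpose _).symm

theorem colDet_smul_mulVec (r : Fin k → ℂ) (g : Matrix (Fin k) (Fin k) ℂ)
    (c : Fin k → Fin k → ℂ) :
    colDet (fun b => r b • (g *ᵥ c b)) = (∏ b, r b) * g.det * colDet c := by
  rw [mul_assoc, colDet, colDet, ← Matrix.det_mul]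
  exact Matrix.det_mul_row r _

end ColDet

section SignedMonomial

variable {k n : ℕ}

/-- `F` agrees on generic configurations with `±1` times a Laurent monomial in the frozen minors. -/
def IsSignedMonomial (F : (ZMod n → Fin k → ℂ) → ℂ) : Prop :=
  ∃ (ε : ℂ) (e : Fin n → ℤ), (ε = 1 ∨ ε = -1) ∧
    ∀ v : ZMod n → Fin k → ℂ, Generic k n v → F v = ε * laurent k n e v

variable {F G : (ZMod n → Fin k → ℂ) → ℂ}

theorem IsSignedMonomial.congr (hF : IsSignedMonomial F) (h : ∀ v, Generic k n v → G v = F v) :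
    IsSignedMonomial G := by
  obtain ⟨ε, e, hε, hF⟩ := hF
  exact ⟨ε, e, hε, fun v hv => (h v hv).trans (hF v hv)⟩

theorem isSignedMonomial_neg_one_pow (t : ℕ) :
    IsSignedMonomial fun _ : ZMod n → Fin k → ℂ => (-1) ^ t :=
  ⟨(-1) ^ t, 0, neg_one_pow_eq_or ℂ t, fun v _ => by simp [laurent]⟩

theorem isSignedMonomial_frozen [NeZero n] (m : ZMod n) :
    IsSignedMonomial fun v => frozen k n v m := by
  refine ⟨1, Pi.single ⟨m.val, m.val_lt⟩ 1, Or.inl rfl, fun v _ => ?_⟩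
  rw [laurent, Fintype.prod_eq_single (⟨m.val, m.val_lt⟩ : Fin n)]
  · simp
  · intro b hb
    rw [Pi.single_eq_of_ne hb, zpow_zero]

theorem laurent_add (e e' : Fin n → ℤ) {v : ZMod n → Fin k → ℂ} (hv : Generic k n v) :
    laurent k n (e + e') v = laurent k n e v * laurent k n e' v := by
  simp only [laurent, Pi.add_apply, zpow_add₀ (hv _), Finset.prod_mul_distrib]

theorem IsSignedMonomial.mul (hF : IsSignedMonomial F) (hG : IsSignedMonomial G) :
    IsSignedMonomial fun v => F v * G v := by
  obtain ⟨ε, e, hε, hF⟩ := hF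
  obtain ⟨ε', e', hε', hG⟩ := hG
  refine ⟨ε * ε', e + e', ?_, fun v hv => ?_⟩
  · rcases hε with rfl | rfl <;> rcases hε' with rfl | rfl <;> simp
  · simp only [hF v hv, hG v hv, laurent_add e e' hv]
    ring

theorem IsSignedMonomial.inv (hF : IsSignedMonomial F) : IsSignedMonomial fun v => (F v)⁻¹ := by
  obtain ⟨ε, e, hε, hF⟩ := hF
  have hinv : ε⁻¹ = ε := by rcases hε with rfl | rfl <;> norm_num
  refine ⟨ε, -e, hε, fun v hv => ?_⟩
  simp only [hF v hv, mul_inv, hinv, laurent, Pi.neg_apply, zpow_neg, Finset.prod_inv_distrib]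

theorem IsSignedMonomial.neg (hF : IsSignedMonomial F) : IsSignedMonomial fun v => -F v :=
  ((isSignedMonomial_neg_one_pow 1).mul hF).congr fun v _ => by simp

theorem isSignedMonomial_prod {ι : Type*} (s : Finset ι) {F : ι → (ZMod n → Fin k → ℂ) → ℂ}
    (hF : ∀ i, IsSignedMonomial (F i)) : IsSignedMonomial fun v => ∏ i ∈ s, F i v := by
  classical
  induction s using Finset.induction_on with
  | empty => simpa using isSignedMonomial_neg_one_pow 0
  | insert a s ha ih => exact ((hF a).mul ih).congr fun v _ => Finset.prod_insert ha

theorem IsSignedMonomial.ne_zero (hF : IsSignedMonomial F) {v : ZMod n → Fin k → ℂ}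
    (hv : Generic k n v) : F v ≠ 0 := by
  obtain ⟨ε, e, hε, hF⟩ := hF
  rw [hF v hv]
  refine mul_ne_zero (by rcases hε with rfl | rfl <;> norm_num) ?_
  exact Finset.prod_ne_zero_iff.2 fun m _ => zpow_ne_zero _ (hv _)

end SignedMonomial

section DualForm

variable {k n : ℕ}

/-- The matrix with rows `v_q, …, v_{q+k-1}`, whose determinant is the frozen minor `Δ_q(v)`. -/
def window (v : ZMod n → Fin k → ℂ) (q : ZMod n) : Matrix (Fin k) (Fin k) ℂ :=
  Matrix.of fun b => v (q + ((b : ℕ) : ZMod n))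

theorem frozen_eq_det_window (v : ZMod n → Fin k → ℂ) (q : ZMod n) :
    frozen k n v q = (window v q).det :=
  colDet_eq_det_of _

variable [NeZero k]

/-- The coefficient vector of the linear form `φ_q` dual to `v_q` in the basis
`v_q, …, v_{q+k-1}`; it is only meaningful when `Δ_q(v) ≠ 0`. -/
def dualForm (v : ZMod n → Fin k → ℂ) (q : ZMod n) : Fin k → ℂ :=
  (window v q)⁻¹ *ᵥ Pi.single 0 1

/-- The projection of `y` along `v_q` onto the kernel of `dualForm v q`. -/
def projAlong (v : ZMod n → Fin k → ℂ) (q : ZMod n) (y : Fin k → ℂ) : Fin k → ℂ :=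
  y - (dualForm v q ⬝ᵥ y) • v q

variable {v : ZMod n → Fin k → ℂ}

theorem window_mulVec_dualForm (hv : Generic k n v) (q : ZMod n) :
    window v q *ᵥ dualForm v q = Pi.single 0 1 := by
  have hunit : IsUnit (window v q).det := by
    rw [← frozen_eq_det_window]
    exact (hv q).isUnit
  rw [dualForm, Matrix.mulVec_mulVec, Matrix.mul_nonsing_inv _ hunit, Matrix.one_mulVec]

theorem dualForm_dotProduct_self (hv : Generic k n v) (q : ZMod n) :
    dualForm v q ⬝ᵥ v q = 1 := by
  simpa [window, Matrix.mulVec, dotProduct_comm] using congrFun (window_mulVec_dualForm hv q) 0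

theorem dualForm_dotProduct_add (hv : Generic k n v) (q : ZMod n) {b : ℕ} (hb0 : b ≠ 0)
    (hbk : b < k) : dualForm v q ⬝ᵥ v (q + (b : ZMod n)) = 0 := by
  have hne : (⟨b, hbk⟩ : Fin k) ≠ 0 := fun h => hb0 (congrArg Fin.val h)
  have h := congrFun (window_mulVec_dualForm hv q) ⟨b, hbk⟩
  rwa [Pi.single_eq_of_ne hne, Matrix.mulVec, dotProduct_comm] at h

theorem dualForm_dotProduct_projAlong (hv : Generic k n v) (q : ZMod n) (y : Fin k → ℂ) :
    dualForm v q ⬝ᵥ projAlong v q y = 0 := by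
  rw [projAlong, dotProduct_sub, dotProduct_smul, dualForm_dotProduct_self hv, smul_eq_mul,
    mul_one, sub_self]

theorem projAlong_add (hv : Generic k n v) (q : ZMod n) {b : ℕ} (hb0 : b ≠ 0) (hbk : b < k) :
    projAlong v q (v (q + (b : ZMod n))) = v (q + (b : ZMod n)) := by
  rw [projAlong, dualForm_dotProduct_add hv q hb0 hbk, zero_smul, sub_zero]

theorem dualForm_dotProduct_add_k (hv : Generic k n v) (q : ZMod n) :
    dualForm v q ⬝ᵥ v (q + (k : ZMod n))
      = (-1) ^ (k - 1) * frozen k n v (q + 1) * (frozen k n v q)⁻¹ := by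
  obtain ⟨m, rfl⟩ := Nat.exists_eq_succ_of_ne_zero (NeZero.ne k)
  rw [eq_mul_inv_iff_mul_eq₀ (hv q), frozen_eq_det_window, frozen_eq_det_window,
    ← det_updateRow_of_mulVec_eq_single (window_mulVec_dualForm hv q)]
  have h := det_cons_succAbove (fun b => v (q + 1 + ((b : ℕ) : ZMod n))) (Fin.last m)
  rw [Fin.val_last] at h
  refine Eq.trans ?_ h
  congr 1
  ext b a
  refine Fin.cases ?_ (fun j => ?_) b
  · simp [add_comm, add_left_comm]
  · simp [window, Matrix.updateRow_ne, add_comm, add_left_comm]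

theorem isSignedMonomial_dualForm_dotProduct_add_k [NeZero n] (q : ZMod n) :
    IsSignedMonomial fun v : ZMod n → Fin k → ℂ => dualForm v q ⬝ᵥ v (q + (k : ZMod n)) :=
  (((isSignedMonomial_neg_one_pow (k - 1)).mul (isSignedMonomial_frozen (q + 1))).mul
    (isSignedMonomial_frozen q).inv).congr fun _ hv => dualForm_dotProduct_add_k hv q

end DualForm

section Anchor

variable {k n : ℕ} [NeZero n]

/-- The positions divisible by `k`, i.e. those of the vectors dragged by `σ_1 ∘ ⋯ ∘ σ_{k-1}`. -/
def IsAnchor (k : ℕ) {n : ℕ} (q : ZMod n) : Prop := k ∣ q.val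

theorem isAnchor_iff_castHom (hd : k ∣ n) {q : ZMod n} :
    IsAnchor k q ↔ ZMod.castHom hd (ZMod k) q = 0 := by
  rw [IsAnchor, ← ZMod.natCast_eq_zero_iff, ZMod.natCast_val, ZMod.castHom_apply]

theorem IsAnchor.add_k (hd : k ∣ n) {q : ZMod n} (hq : IsAnchor k q) :
    IsAnchor k (q + (k : ZMod n)) := by
  rw [isAnchor_iff_castHom hd] at hq ⊢
  rw [map_add, hq, map_natCast, ZMod.natCast_self, add_zero]

theorem IsAnchor.val_sub_mod_eq_iff (hd : k ∣ n) {q : ZMod n} (hq : IsAnchor k q) {s i : ℕ}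
    (hs : s < k) (hi : i < k) : (q - (s : ZMod n)).val % k = (k - i) % k ↔ s = i := by
  have hcast : (((q - (s : ZMod n)).val : ℕ) : ZMod k) = -(s : ZMod k) := by
    rw [ZMod.natCast_val, ← ZMod.castHom_apply (h := hd), map_sub,
      (isAnchor_iff_castHom hd).1 hq, map_natCast, zero_sub]
  rw [← ZMod.natCast_eq_natCast_iff', hcast, Nat.cast_sub hi.le, ZMod.natCast_self, zero_sub,
    neg_inj, ZMod.natCast_eq_natCast_iff', Nat.mod_eq_of_lt hs, Nat.mod_eq_of_lt hi]

theorem exists_isAnchor_sub [NeZero k] (hd : k ∣ n) (j : ZMod n) :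
    ∃ q : ZMod n, IsAnchor k q ∧ ∃ s < k, j = q - (s : ZMod n) := by
  refine ⟨j + ((ZMod.castHom hd (ZMod k) (-j)).val : ZMod n), ?_, _, ZMod.val_lt _, by ring⟩
  rw [isAnchor_iff_castHom hd, map_add, map_natCast, ZMod.natCast_zmod_val, ← map_add,
    add_neg_cancel, map_zero]

theorem IsAnchor.eq_zero_or_eq_k (hn : n = 2 * k) {q : ZMod n} (hq : IsAnchor k q) :
    q = 0 ∨ q = (k : ZMod n) := by
  obtain ⟨c, hc⟩ := hq
  have hlt : k * c < k * 2 := by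
    rw [← hc, mul_comm k, ← hn]
    exact q.val_lt
  have hc2 : c < 2 := lt_of_mul_lt_mul_left hlt k.zero_le
  rw [← ZMod.natCast_zmod_val q, hc]
  interval_cases c <;> simp

theorem artin_apply_anchor_sub (hd : k ∣ n) (u : ZMod n → Fin k → ℂ) {q : ZMod n}
    (hq : IsAnchor k q) {s t : ℕ} (hs : s < k) (ht : t + 1 < k) :
    artin k n (k - (t + 1)) u (q - (s : ZMod n)) =
      if s = t + 1 then u (q - (t : ZMod n))
      else if s = t then
        colDet (fun b : Fin k => if (b : ℕ) = 0 then u (q - ((t + 1 : ℕ) : ZMod n))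
          else u (q - (t : ZMod n) + ((b : ℕ) : ZMod n))) • u (q - (t : ZMod n))
          - frozen k n u (q - (t : ZMod n)) • u (q - ((t + 1 : ℕ) : ZMod n))
      else u (q - (s : ZMod n)) := by
  have hsucc : k - (t + 1) + 1 = k - t := by lia
  rw [artin, hsucc]
  simp only [hq.val_sub_mod_eq_iff hd hs ht, hq.val_sub_mod_eq_iff hd hs (Nat.lt_of_succ_lt ht)]
  split_ifs with h1 h2
  · subst h1
    congr 1
    push_cast
    ring
  · subst h2
    rw [Nat.cast_succ, sub_sub]
  · rfl

end Anchor

section Drag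

variable {k n : ℕ}

/-- The scalar by which the projection of `v_{q-t-1}` is multiplied when `v_q` moves past it. -/
def dragScalar (v : ZMod n → Fin k → ℂ) (q : ZMod n) (t : ℕ) : ℂ :=
  -((∏ s : Fin t, dragScalar v q s) * ((-1) ^ t * frozen k n v (q - (t : ZMod n))))

theorem isSignedMonomial_dragScalar [NeZero n] (q : ZMod n) (t : ℕ) :
    IsSignedMonomial fun v : ZMod n → Fin k → ℂ => dragScalar v q t := by
  induction t using Nat.strong_induction_on with
  | _ t ih =>
    exact ((isSignedMonomial_prod _ fun s : Fin t => ih s s.isLt).mul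
      ((isSignedMonomial_neg_one_pow t).mul (isSignedMonomial_frozen _))).neg.congr
        fun v _ => by rw [dragScalar]

variable [NeZero k]

/-- The vector at position `q - s`, for a multiple `q` of `k` and `s < k`, once `v_q` has been
dragged to position `q - t`. -/
def draggedVector (v : ZMod n → Fin k → ℂ) (q : ZMod n) (t s : ℕ) : Fin k → ℂ :=
  if s < t then dragScalar v q s • projAlong v q (v (q - ((s + 1 : ℕ) : ZMod n)))
  else if s = t then v q
  else v (q - (s : ZMod n))

/-- `u` arises from `v` by dragging every `v_q` with `k ∣ q` to position `q - t`. -/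
def IsDragged (v : ZMod n → Fin k → ℂ) (t : ℕ) (u : ZMod n → Fin k → ℂ) : Prop :=
  ∀ q : ZMod n, IsAnchor k q → ∀ s < k, u (q - (s : ZMod n)) = draggedVector v q t s

theorem isDragged_zero (v : ZMod n → Fin k → ℂ) : IsDragged v 0 v := by
  rintro q - (_ | s) - <;> simp [draggedVector]

namespace IsDragged

variable {v u : ZMod n → Fin k → ℂ} {t : ℕ} {q : ZMod n}

theorem apply_anchor_sub (hu : IsDragged v t u) (hq : IsAnchor k q) (ht : t < k) :
    u (q - (t : ZMod n)) = v q := by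
  rw [hu q hq t ht, draggedVector, if_neg (lt_irrefl t), if_pos rfl]

variable [NeZero n]

/-- The vectors to the right of position `q` are untouched; they lie in `ker φ_q`, so they equal
their own projections and both cases have the same form. -/
theorem apply_anchor_sub_add (hu : IsDragged v t u) (hd : k ∣ n) (hv : Generic k n v)
    (hq : IsAnchor k q) {j : ℕ} (hj : j + 1 < k) (ht : t < k) :
    u (q - (t : ZMod n) + ((j + 1 : ℕ) : ZMod n))
      = (if j < t then dragScalar v q (t - 1 - j) else 1) •
        projAlong v q (v (q - (t : ZMod n) + ((if j < t then j else j + 1 : ℕ) : ZMod n))) := by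
  split_ifs with hjt
  · have hpos : q - (t : ZMod n) + ((j + 1 : ℕ) : ZMod n) = q - ((t - 1 - j : ℕ) : ZMod n) := by
      rw [Nat.sub_sub, Nat.cast_sub (by lia)]
      push_cast
      ring
    have hpos' : q - (t : ZMod n) + (j : ZMod n) = q - ((t - 1 - j + 1 : ℕ) : ZMod n) := by
      rw [show t - 1 - j + 1 = t - j by lia, Nat.cast_sub hjt.le]
      ring
    rw [hpos, hpos', hu q hq _ (by lia), draggedVector, if_pos (by lia)]
  · have hpos : q - (t : ZMod n) + ((j + 1 : ℕ) : ZMod n) = q + ((j + 1 - t : ℕ) : ZMod n) := by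
      rw [Nat.cast_sub (by lia)]
      ring
    have hnext : q + ((j + 1 - t : ℕ) : ZMod n)
        = q + (k : ZMod n) - ((k - (j + 1 - t) : ℕ) : ZMod n) := by
      rw [Nat.cast_sub (n := k) (by lia)]
      ring
    rw [hpos, projAlong_add hv q (by lia) (by lia), one_smul, hnext,
      hu _ (hq.add_k hd) _ (by lia), draggedVector, if_neg (by lia), if_neg (by lia)]

theorem window_mulVec_dualForm (hu : IsDragged v t u) (hd : k ∣ n) (hv : Generic k n v)
    (hq : IsAnchor k q) (ht : t < k) :
    window u (q - (t : ZMod n)) *ᵥ dualForm v q = Pi.single 0 1 := by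
  obtain ⟨m, rfl⟩ := Nat.exists_eq_succ_of_ne_zero (NeZero.ne k)
  ext b
  rw [Matrix.mulVec, dotProduct_comm]
  change dualForm v q ⬝ᵥ u (q - (t : ZMod n) + ((b : ℕ) : ZMod n)) = _
  refine Fin.cases ?_ (fun j => ?_) b
  · rw [Pi.single_eq_same, Fin.val_zero, Nat.cast_zero, add_zero, hu.apply_anchor_sub hq ht,
      dualForm_dotProduct_self hv]
  · rw [Pi.single_eq_of_ne j.succ_ne_zero, Fin.val_succ,
      hu.apply_anchor_sub_add hd hv hq (by lia) ht, dotProduct_smul,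
      dualForm_dotProduct_projAlong hv, smul_zero]

theorem colDet_replace_first (hu : IsDragged v t u) (hd : k ∣ n) (hv : Generic k n v)
    (hq : IsAnchor k q) (ht : t < k) (y : Fin k → ℂ) :
    colDet (fun b : Fin k => if (b : ℕ) = 0 then y
        else u (q - (t : ZMod n) + ((b : ℕ) : ZMod n)))
      = (dualForm v q ⬝ᵥ y) * frozen k n u (q - (t : ZMod n)) := by
  rw [frozen_eq_det_window,
    ← det_updateRow_of_mulVec_eq_single (hu.window_mulVec_dualForm hd hv hq ht), colDet_eq_det_of]
  congr 1
  ext b a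
  simp only [Matrix.of_apply, Matrix.updateRow_apply, Fin.val_eq_zero_iff]
  split_ifs <;> rfl

theorem frozen_eq_neg_dragScalar (hu : IsDragged v t u) (hd : k ∣ n) (hv : Generic k n v)
    (hq : IsAnchor k q) (ht : t < k) :
    frozen k n u (q - (t : ZMod n)) = -dragScalar v q t := by
  obtain ⟨m, rfl⟩ := Nat.exists_eq_succ_of_ne_zero (NeZero.ne k)
  let w (b : Fin (m + 1)) : Fin (m + 1) → ℂ := v (q - (t : ZMod n) + ((b : ℕ) : ZMod n))
  let r (j : Fin m) : ℂ := if (j : ℕ) < t then dragScalar v q (t - 1 - j) else 1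
  let i : Fin (m + 1) := ⟨t, ht⟩
  have hwi : w i = v q := by simp [w, i]
  have hwindow : window u (q - (t : ZMod n)) = Matrix.of (Fin.cons (w i) fun j =>
      r j • (w (i.succAbove j) - (dualForm v q ⬝ᵥ w (i.succAbove j)) • w i)) := by
    refine congrArg Matrix.of (funext fun b => ?_)
    refine Fin.cases ?_ (fun j => ?_) b
    · simpa [hwi] using hu.apply_anchor_sub hq ht
    · have hval : (i.succAbove j : ℕ) = if (j : ℕ) < t then (j : ℕ) else j + 1 := by
        simp only [Fin.succAbove, Fin.lt_def, Fin.val_castSucc, i]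
        split_ifs <;> rfl
      rw [hwi]
      simpa [hval, w, r, projAlong] using hu.apply_anchor_sub_add hd hv hq (j := j) (by lia) ht
  have hprod : ∏ j, r j = ∏ s : Fin t, dragScalar v q s :=
    prod_fin_ite_lt_reflect _ (Nat.le_of_lt_succ ht)
  rw [frozen_eq_det_window, hwindow, det_cons_smul_sub_smul, det_cons_succAbove, hprod,
    dragScalar, neg_neg, frozen_eq_det_window]
  rfl

end IsDragged

variable [NeZero n] {v : ZMod n → Fin k → ℂ}

theorem isDragged_artin {u : ZMod n → Fin k → ℂ} {t : ℕ} (hu : IsDragged v t u) (hd : k ∣ n)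
    (hv : Generic k n v) (ht : t + 1 < k) :
    IsDragged v (t + 1) (artin k n (k - (t + 1)) u) := by
  intro q hq s hs
  have ht' : t < k := Nat.lt_of_succ_lt ht
  rw [artin_apply_anchor_sub hd u hq hs ht, draggedVector]
  rcases eq_or_ne s (t + 1) with rfl | hst1
  · simp [hu.apply_anchor_sub hq ht']
  rw [if_neg hst1, if_neg hst1]
  rcases eq_or_ne s t with rfl | hst
  · have hnext : u (q - ((s + 1 : ℕ) : ZMod n)) = v (q - ((s + 1 : ℕ) : ZMod n)) := by
      rw [hu q hq _ ht, draggedVector, if_neg (by lia), if_neg (by lia)]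
    rw [if_pos rfl, if_pos s.lt_succ_self, hnext, hu.colDet_replace_first hd hv hq ht',
      hu.frozen_eq_neg_dragScalar hd hv hq ht', hu.apply_anchor_sub hq ht', projAlong]
    module
  · rw [if_neg hst, hu q hq s hs, draggedVector, if_neg hst]
    simp only [Nat.lt_succ_iff_lt_or_eq, hst, or_false]

theorem isDragged_artinCompRev (hd : k ∣ n) (hv : Generic k n v) :
    IsDragged v (k - 1) (artinCompRev k n (k - 1) v) := by
  have hk := NeZero.pos k
  suffices h : ∀ (i t : ℕ) (u : ZMod n → Fin k → ℂ), i + t + 1 = k → IsDragged v t u →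
      IsDragged v (k - 1) (artinCompRev k n i u) from
    h (k - 1) 0 v (by lia) (isDragged_zero v)
  intro i
  induction i with
  | zero =>
    rintro t u rfl hu
    simpa [artinCompRev] using hu
  | succ i ih =>
    intro t u hit hu
    rw [artinCompRev, show i + 1 = k - (t + 1) by lia]
    exact ih (t + 1) _ (by lia) (isDragged_artin hu hd hv (by lia))

end Drag

section TwoK

variable {k n : ℕ}

theorem natCast_add_self_eq_zero (hn : n = 2 * k) : (k : ZMod n) + (k : ZMod n) = 0 := by
  rw [← Nat.cast_add, ← two_mul, ← hn, ZMod.natCast_self]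

variable [NeZero k]

/-- The matrix of `y ↦ y - φ_0(y) v_0 - φ_k(y) v_k`, which for `n = 2k` realises the inverse cyclic
shift up to scalars. -/
def shiftMatrix (v : ZMod n → Fin k → ℂ) : Matrix (Fin k) (Fin k) ℂ :=
  1 - Matrix.vecMulVec (v 0) (dualForm v 0)
    - Matrix.vecMulVec (v (k : ZMod n)) (dualForm v (k : ZMod n))

theorem shiftMatrix_mulVec (v : ZMod n → Fin k → ℂ) (y : Fin k → ℂ) :
    shiftMatrix v *ᵥ y = y - (dualForm v 0 ⬝ᵥ y) • v 0
      - (dualForm v (k : ZMod n) ⬝ᵥ y) • v (k : ZMod n) := by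
  simp [shiftMatrix, Matrix.sub_mulVec, Matrix.vecMulVec_mulVec]

variable [NeZero n]

theorem shiftMatrix_mulVec_of_isAnchor (hn : n = 2 * k) (v : ZMod n → Fin k → ℂ) {q : ZMod n}
    (hq : IsAnchor k q) (y : Fin k → ℂ) :
    shiftMatrix v *ᵥ y
      = projAlong v q y - (dualForm v (q + (k : ZMod n)) ⬝ᵥ y) • v (q + (k : ZMod n)) := by
  rw [shiftMatrix_mulVec, projAlong]
  rcases hq.eq_zero_or_eq_k hn with rfl | rfl
  · rw [zero_add]
  · rw [natCast_add_self_eq_zero hn, sub_right_comm]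

theorem isSignedMonomial_det_shiftMatrix (hn : n = 2 * k) :
    IsSignedMonomial fun v : ZMod n → Fin k → ℂ => (shiftMatrix v).det := by
  have h0 := isSignedMonomial_dualForm_dotProduct_add_k (k := k) (0 : ZMod n)
  have hk := isSignedMonomial_dualForm_dotProduct_add_k (k := k) (k : ZMod n)
  rw [zero_add] at h0
  rw [natCast_add_self_eq_zero hn] at hk
  refine (h0.mul hk).neg.congr fun v hv => ?_
  rw [shiftMatrix, det_one_sub_vecMulVec_sub_vecMulVec, dualForm_dotProduct_self hv,
    dualForm_dotProduct_self hv]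
  ring

theorem exists_artinCompRev_apply_eq_smul_mulVec (hn : n = 2 * k) (j : ZMod n) :
    ∃ C : (ZMod n → Fin k → ℂ) → ℂ, IsSignedMonomial C ∧ ∀ v, Generic k n v →
      artinCompRev k n (k - 1) v j = C v • (shiftMatrix v *ᵥ v (j - 1)) := by
  have hd : k ∣ n := ⟨2, by rw [hn, mul_comm]⟩
  obtain ⟨q, hq, s, hs, rfl⟩ := exists_isAnchor_sub hd j
  have hprev : q - (s : ZMod n) - 1 = q + (k : ZMod n) + ((k - (s + 1) : ℕ) : ZMod n) := by
    rw [Nat.cast_sub hs]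
    push_cast
    linear_combination -natCast_add_self_eq_zero hn
  rcases (Nat.le_sub_one_of_lt hs).lt_or_eq with hlt | rfl
  · refine ⟨_, isSignedMonomial_dragScalar q s, fun v hv => ?_⟩
    rw [isDragged_artinCompRev hd hv q hq s hs, draggedVector, if_pos hlt,
      shiftMatrix_mulVec_of_isAnchor hn v hq, hprev,
      dualForm_dotProduct_add hv _ (by lia) (by lia), zero_smul, sub_zero, ← hprev, sub_sub,
      Nat.cast_succ]
  · have hφ := isSignedMonomial_dualForm_dotProduct_add_k (k := k) q
    refine ⟨_, hφ.inv.neg, fun v hv => ?_⟩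
    rw [Nat.sub_add_cancel NeZero.one_le, Nat.sub_self, Nat.cast_zero, add_zero] at hprev
    rw [isDragged_artinCompRev hd hv q hq _ hs, draggedVector, if_neg (lt_irrefl _), if_pos rfl,
      shiftMatrix_mulVec_of_isAnchor hn v hq, hprev, dualForm_dotProduct_self hv, projAlong,
      one_smul, sub_sub_cancel_left, smul_neg, neg_smul, neg_neg, smul_smul,
      inv_mul_cancel₀ (hφ.ne_zero hv), one_smul]

end TwoK

theorem extra_relation_for_n_eq_two_k_general {k n : ℕ} (hk : k ≠ 0) (hn : n = 2 * k)
    (f : Fin k → ZMod n) :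
    ∃ (ε : ℂ) (e : Fin n → ℤ), (ε = 1 ∨ ε = -1) ∧
      ∀ v : ZMod n → Fin k → ℂ, Generic k n v →
        colDet (fun b => artinCompRev k n (k - 1) v (f b))
          = (ε * laurent k n e v) * colDet (fun b => v (f b - 1)) := by
  have : NeZero k := ⟨hk⟩
  have : NeZero n := ⟨by lia⟩
  choose C hC hCv using exists_artinCompRev_apply_eq_smul_mulVec (k := k) hn
  obtain ⟨ε, e, hε, hM⟩ := (isSignedMonomial_prod Finset.univ fun b => hC (f b)).mul
    (isSignedMonomial_det_shiftMatrix hn)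
  refine ⟨ε, e, hε, fun v hv => ?_⟩
  simp only [hCv _ v hv]
  rw [colDet_smul_mulVec, ← hM v hv]

/-- Proposition 8.2 (extra relation for `n = 2k`): a `k`-element subset
`I ⊆ ZMod n` is encoded by a strictly increasing map `f : Fin k → Fin n`
listing the representatives of its elements in increasing order, and
`Δ_I(v) = colDet (fun b => v (f b))`.  On `Gr(k, 2k)` the composition
`σ_1 ∘ σ_2 ∘ ⋯ ∘ σ_{k−1}` acts as the inverse cyclic shift `I ↦ I − 1`,
up to signs and Laurent monomials in the frozen minors. -/
theorem extra_relation_for_n_eq_two_k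
    (k n : ℕ) (hk : 2 ≤ k) (hn : n = 2 * k)
    (f : Fin k → Fin n) (hf : StrictMono f) :
    ∃ (ε : ℂ) (e : Fin n → ℤ), (ε = 1 ∨ ε = -1) ∧
      ∀ v : ZMod n → Fin k → ℂ, Generic k n v →
        colDet (fun b : Fin k =>
            artinCompRev k n (k - 1) v (((f b : ℕ) : ZMod n)))
          = (ε * laurent k n e v) *
            colDet (fun b : Fin k => v (((f b : ℕ) : ZMod n) - 1)) := by
  exact extra_relation_for_n_eq_two_k_general (by lia) hn fun b => ((f b : ℕ) : ZMod n)

end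
end

section
/- Half-twist window formula (first part of Proposition 8.1): Let k ≥ 2, r ≥ 2, n = rk. Let H := σ_1 ∘ (σ_2 ∘ σ_1) ∘ (σ_3 ∘ σ_2 ∘ σ_1) ∘ ⋯ ∘ (σ_{k−1} ∘ ⋯ ∘ σ_1) be the half-twist composition of Artin generators. Define the k-periodic map W on configurations whose window notation is [v_k, (v_{k−1} v_k) ∩ (v_{k+1} ⋯ v_{2k−1}), (v_{k−2} v_{k−1} v_k) ∩ (v_{k+1} ⋯ v_{2k−2}), …, (v_2 v_3 ⋯ v_k) ∩ (v_{k+1} v_{k+2}), v_{k+1}]; explicitly, W(v)_j = v_{j+k−1} if j ≡ 1 (mod k), W(v)_j = v_{j+1} if j ≡ 0 (mod k), and for j ≡ ℓ (mod k) with 2 ≤ ℓ ≤ k−1, W(v)_j is the degree-one Grassmann–Cayley meet of the ℓ vectors v_{j+k−2ℓ+1}, v_{j+k−2ℓ+2}, …, v_{j+k−ℓ} with the k+1−ℓ vectors v_{j+k−ℓ+1}, …, v_{j+2k−2ℓ+1}. Then for every index j ∈ ZMod n there exist a sign ε_j ∈ {+1, −1} and a Laurent monomial M_j in the frozen minors (both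 independent of v) such that for every generic configuration v, the j-th vector of H(v) equals ε_j · M_j(v) · W(v)_j. -/
open scoped BigOperators

noncomputable section

/-- The half-twist `H = σ_1 ∘ (σ_2 ∘ σ_1) ∘ ⋯ ∘ (σ_m ∘ ⋯ ∘ σ_1)`. -/
def halfTwist (k n : ℕ) : ℕ → (ZMod n → Fin k → ℂ) → ZMod n → Fin k → ℂ
  | 0, v => v
  | m + 1, v => halfTwist k n m (artinComp k n (m + 1) v)

/-- The k-periodic map `W` with window notation
`[v_k, (v_{k−1} v_k) ∩ (v_{k+1} ⋯ v_{2k−1}), …, (v_2 ⋯ v_k) ∩ (v_{k+1} v_{k+2}), v_{k+1}]`. -/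
def Wmap (k n : ℕ) (v : ZMod n → Fin k → ℂ) : ZMod n → Fin k → ℂ :=
  fun j =>
    if (ZMod.val j) % k = 1 % k then v (j + ((k - 1 : ℕ) : ZMod n))
    else if (ZMod.val j) % k = 0 then v (j + 1)
    else
      let l : ℕ := (ZMod.val j) % k
      gcMeet
        (fun m : Fin l =>
          v (j + (k : ZMod n) - ((2 * l : ℕ) : ZMod n) + 1 + ((m : ℕ) : ZMod n)))
        (fun m : Fin (k + 1 - l) =>
          v (j + ((k - l : ℕ) : ZMod n) + 1 + ((m : ℕ) : ZMod n)))

/-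
For `j ≡ i (mod k)` the generator `σ_i` replaces the pair `v_j, v_{j+1}` by `v_{j+1}` and a vector
on the meet of the plane of `v_j, v_{j+1}` with the span of the next `k - 1` vectors. It multiplies
each frozen minor by another one, or, for the windows that separate the pair, replaces it by a
product of two, so genericity is preserved and every coefficient that arises below is a frozen
Laurent monomial. Hence `σ_m ∘ ⋯ ∘ σ_1` shifts `v_2, …, v_{m+1}` to the left and puts the meet
`(v_1 ⋯ v_{m+1}) ∩ (v_{m+2} ⋯ v_{k+1})` behind them.

In the half-twist, the factor starting with `σ_{k-s-1}` computes such a meet from vectors that are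
already shifts or meets of the original ones. A meet in a generic configuration is determined, up to
its leading coefficient, by membership in one span and membership modulo its leading vector in a
second, and these memberships transfer from the intermediate configuration to the original one.

Signs and exponents come out independent of `v` because the argument runs over the ring of functions
on the set of generic configurations, whose signed Laurent monomials in the frozen minors form a
group of units. Cyclic configurations are unrolled to `ℤ`-indexed ones.
-/

namespace HalfTwist

open Function MulAction Submodule

section AlternatingMap

variable {R M N ι : Type*} [CommRing R] [AddCommGroup M] [Module R M] [AddCommGroup N]
  [Module R N] [DecidableEq ι]

lemma map_update_update_smul_sub_smul (g : M [⋀^ι]→ₗ[R] N) (c : ι → M) {p q : ι} (hpq : p ≠ q)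
    (a b : R) :
    g (update (update c p (c q)) q (a • c q - b • c p)) = b • g c := by
  have hrepeat : g (update (update c p (c q)) q (c q)) = 0 :=
    g.map_eq_zero_of_eq _ (by simp [update_of_ne hpq]) hpq
  have hswap : g (update (update c p (c q)) q (c p)) = -g c := by
    rw [← Equiv.comp_swap_eq_update, g.map_swap _ hpq.symm]
  rw [g.map_update_sub, g.map_update_smul, g.map_update_smul, hrepeat, hswap]
  simp

end AlternatingMap

variable {R : Type*} {k : ℕ}

/-- The `k` consecutive vectors of a `ℤ`-indexed configuration starting at `t`. -/
def block (V : ℤ → Fin k → R) (t : ℤ) : Fin k → Fin k → R := fun b => V (t + (b : ℕ))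

lemma block_add_one (V : ℤ → Fin k → R) (t : ℤ) :
    block V (t + 1) = fun b : Fin k => V (t + (b : ℕ) + 1) :=
  funext fun _ => congrArg V (add_right_comm _ _ _)

variable [CommRing R]

/-- The frozen minor `Δ_t` of a `ℤ`-indexed configuration; the vectors are the rows of the matrix,
which does not change the determinant and lets `Matrix.detRowAlternating` apply. -/
def minor (V : ℤ → Fin k → R) (t : ℤ) : R := Matrix.detRowAlternating (block V t)

/-- The linear form `z ↦ det (z | v_{t+1} | ⋯ | v_{t+k-1})`. -/
def leadForm [NeZero k] (V : ℤ → Fin k → R) (t : ℤ) : (Fin k → R) →ₗ[R] R :=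
  Matrix.detRowAlternating.toMultilinearMap.toLinearMap (block V t) 0

/-- The span of the vectors `v_a, …, v_{b-1}`. -/
def arcSpan (V : ℤ → Fin k → R) (a b : ℤ) : Submodule R (Fin k → R) := span R (V '' Set.Ico a b)

section ArcSpan

variable {V : ℤ → Fin k → R} {a b : ℤ}

lemma apply_mem_arcSpan {i : ℤ} (ha : a ≤ i) (hb : i < b) : V i ∈ arcSpan V a b :=
  subset_span ⟨i, ⟨ha, hb⟩, rfl⟩

lemma arcSpan_le_iff {N : Submodule R (Fin k → R)} :
    arcSpan V a b ≤ N ↔ ∀ i, a ≤ i → i < b → V i ∈ N := by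
  rw [arcSpan, span_le, Set.image_subset_iff]
  exact ⟨fun h i ha hb => h ⟨ha, hb⟩, fun h i hi => h i hi.1 hi.2⟩

lemma arcSpan_mono {a' b' : ℤ} (ha : a' ≤ a) (hb : b ≤ b') : arcSpan V a b ≤ arcSpan V a' b' :=
  span_mono (Set.image_mono (Set.Ico_subset_Ico ha hb))

lemma exists_fin_add_eq {t i : ℤ} (ht : t ≤ i) (hi : i < t + k) : ∃ b : Fin k, t + (b : ℕ) = i :=
  ⟨⟨(i - t).toNat, by omega⟩, by simp; omega⟩

lemma disjoint_arcSpan {t : ℤ} (ht : IsUnit (minor V t)) (ha : t ≤ a) (hb : b ≤ t + k) :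
    Disjoint (arcSpan V t a) (arcSpan V a b) := by
  rcases le_or_gt b a with hab | hab
  · simp [arcSpan, Set.Ico_eq_empty (not_lt.2 hab)]
  have hli : LinearIndependent R (block V t) :=
    ((Module.Basis.is_basis_iff_det (Pi.basisFun R (Fin k))).2 (by rwa [Pi.basisFun_det])).1
  have hS : Disjoint {i : Fin k | t + (i : ℕ) < a} {i : Fin k | a ≤ t + (i : ℕ)} := by
    simp [Set.disjoint_left]
  refine (hli.disjoint_span_image hS).mono (arcSpan_le_iff.2 fun i hi hi' => ?_)
    (arcSpan_le_iff.2 fun i hi hi' => ?_)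
  · obtain ⟨c, rfl⟩ := exists_fin_add_eq (k := k) hi (by omega)
    exact subset_span ⟨c, hi', rfl⟩
  · obtain ⟨c, rfl⟩ := exists_fin_add_eq (k := k) (ha.trans hi) (by omega)
    exact subset_span ⟨c, hi, rfl⟩

lemma leadForm_apply_self [NeZero k] (V : ℤ → Fin k → R) (t : ℤ) :
    leadForm V t (V t) = minor V t := by
  have h : V t = block V t 0 := by simp [block]
  rw [h]
  exact congrArg _ (update_eq_self _ _)

lemma arcSpan_le_ker_leadForm [NeZero k] (V : ℤ → Fin k → R) (t : ℤ) :
    arcSpan V (t + 1) (t + k) ≤ LinearMap.ker (leadForm V t) := by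
  refine arcSpan_le_iff.2 fun i hi hi' => ?_
  obtain ⟨b, rfl⟩ := exists_fin_add_eq (by omega : t ≤ i) hi'
  have hb : b ≠ 0 := by rintro rfl; simp at hi
  exact Matrix.detRowAlternating.map_update_self (block V t) hb.symm

end ArcSpan

section ArcMeet

/-- The minor on `v_s, …, v_{s+k}` with `v_{s+i}` omitted, with the sign `(-1)^i` it carries in the
linear relation between these `k + 1` vectors. -/
def omitMinor (V : ℤ → Fin k → R) (s : ℤ) (i : ℕ) : R :=
  (-1) ^ i * Matrix.detRowAlternating fun b : Fin k =>
    if (b : ℕ) < i then V (s + (b : ℕ)) else V (s + (b : ℕ) + 1)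

/-- The Grassmann–Cayley meet `(v_s ⋯ v_{s+p-1}) ∩ (v_{s+p} ⋯ v_{s+k})` up to the sign
`(-1)^(p-1)`, chosen so that the coefficients do not depend on `p`. -/
def arcMeet (V : ℤ → Fin k → R) (s : ℤ) (p : ℕ) : Fin k → R :=
  ∑ i ∈ Finset.range p, omitMinor V s i • V (s + i)

variable (V : ℤ → Fin k → R) (s : ℤ)

lemma omitMinor_zero : omitMinor V s 0 = minor V (s + 1) := by
  simp [omitMinor, minor, block_add_one]

lemma omitMinor_self : omitMinor V s k = (-1) ^ k * minor V s := by
  simp only [omitMinor, Fin.is_lt, if_true, minor]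
  rfl

lemma omitMinor_one [NeZero k] : omitMinor V s 1 = -leadForm V (s + 1) (V s) := by
  have h : (fun b : Fin k => if (b : ℕ) < 1 then V (s + (b : ℕ)) else V (s + (b : ℕ) + 1)) =
      update (block V (s + 1)) 0 (V s) := by
    funext b
    rcases eq_or_ne b 0 with rfl | hb
    · simp
    · have hb' : (b : ℕ) ≠ 0 := Fin.val_ne_zero_iff.2 hb
      simp [update_of_ne hb, block_add_one, hb']
  rw [omitMinor, h, pow_one, neg_one_mul]
  rfl

lemma arcMeet_one : arcMeet V s 1 = minor V (s + 1) • V s := by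
  simp [arcMeet, omitMinor_zero]

lemma arcMeet_succ (p : ℕ) : arcMeet V s (p + 1) = arcMeet V s p + omitMinor V s p • V (s + p) :=
  Finset.sum_range_succ _ _

lemma arcMeet_eq_zero : arcMeet V s (k + 1) = 0 := by
  funext t
  -- Repeating the coordinate `t` gives a singular matrix; expand it along the repeated column.
  let A : Matrix (Fin (k + 1)) (Fin (k + 1)) R :=
    Matrix.of fun i => Fin.cons (V (s + (i : ℕ)) t) (V (s + (i : ℕ)))
  have hA : A.det = 0 := Matrix.det_zero_of_column_eq (Fin.succ_ne_zero t).symm fun i => by simp [A]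
  have hminor (i : Fin (k + 1)) :
      omitMinor V s i = (-1) ^ (i : ℕ) * (A.submatrix i.succAbove Fin.succ).det := by
    rw [omitMinor]
    congr 2
    funext b c
    rcases lt_or_ge (b : ℕ) i with h | h
    · simp [A, h, Fin.succAbove_of_castSucc_lt i b h]
    · simp [A, h.not_gt, Fin.succAbove_of_le_castSucc i b h, add_assoc]
  rw [Matrix.det_succ_column_zero] at hA
  rw [Pi.zero_apply, ← hA, arcMeet, Finset.sum_range, Finset.sum_apply]
  refine Finset.sum_congr rfl fun i _ => ?_
  rw [Pi.smul_apply, smul_eq_mul, hminor]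
  exact mul_right_comm _ _ _

variable {V s} {p : ℕ}

lemma arcMeet_eq_neg_sum (hp : p ≤ k + 1) :
    arcMeet V s p = -∑ i ∈ Finset.Ico p (k + 1), omitMinor V s i • V (s + i) := by
  rw [eq_neg_iff_add_eq_zero, ← arcMeet_eq_zero V s]
  exact Finset.sum_range_add_sum_Ico _ hp

lemma arcMeet_mem_arcSpan (hp : p ≤ k + 1) : arcMeet V s p ∈ arcSpan V (s + p) (s + k + 1) := by
  rw [arcMeet_eq_neg_sum hp]
  refine neg_mem (sum_mem fun i hi => smul_mem _ _ (apply_mem_arcSpan ?_ ?_)) <;>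
  · rw [Finset.mem_Ico] at hi
    omega

lemma arcMeet_add_mem_arcSpan (hp : p ≤ k) :
    arcMeet V s p + omitMinor V s k • V (s + k) ∈ arcSpan V (s + p) (s + k) := by
  rw [arcMeet_eq_neg_sum (by omega), Finset.sum_Ico_succ_top hp, neg_add, neg_add_cancel_right]
  refine neg_mem (sum_mem fun i hi => smul_mem _ _ (apply_mem_arcSpan ?_ ?_)) <;>
  · rw [Finset.mem_Ico] at hi
    omega

lemma arcMeet_sub_mem_arcSpan (hp : p ≠ 0) :
    arcMeet V s p - minor V (s + 1) • V s ∈ arcSpan V (s + 1) (s + p) := by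
  obtain ⟨p, rfl⟩ := Nat.exists_eq_succ_of_ne_zero hp
  rw [arcMeet, Finset.sum_range_succ', omitMinor_zero, Nat.cast_zero, add_zero,
    add_sub_cancel_right]
  refine sum_mem fun i hi => smul_mem _ _ (apply_mem_arcSpan ?_ ?_) <;>
  · rw [Finset.mem_range] at hi
    push_cast
    omega

lemma smul_eq_smul_arcMeet (hV : IsUnit (minor V (s + 1))) (hp : p ≠ 0) (hpk : p ≤ k + 1)
    {z : Fin k → R} {a : R} (hz : z ∈ arcSpan V (s + p) (s + k + 1))
    (ha : z - a • V s ∈ arcSpan V (s + 1) (s + p)) :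
    minor V (s + 1) • z = a • arcMeet V s p := by
  refine sub_eq_zero.1 (disjoint_def.1 (disjoint_arcSpan hV (a := s + p) (b := s + k + 1)
    (by omega) (by omega)) _ ?_ ?_)
  · convert sub_mem (smul_mem _ (minor V (s + 1)) ha)
      (smul_mem _ a (arcMeet_sub_mem_arcSpan hp)) using 1
    module
  · exact sub_mem (smul_mem _ _ hz) (smul_mem _ _ (arcMeet_mem_arcSpan hpk))

end ArcMeet

section Artin

lemma not_modEq_of_lt_of_lt {i j : ℤ} (hij : i < j) (hji : j < i + k) : ¬j ≡ i [ZMOD k] := by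
  intro h
  have := Int.le_of_dvd (by omega) h.symm.dvd
  omega

variable [NeZero k]

/-- The Artin generator `σ_i` on `ℤ`-indexed configurations; no periodicity is imposed. -/
def artinZ (i : ℤ) (V : ℤ → Fin k → R) : ℤ → Fin k → R := fun j =>
  if j ≡ i [ZMOD k] then V (j + 1)
  else if j ≡ i + 1 [ZMOD k] then leadForm V j (V (j - 1)) • V j - minor V j • V (j - 1)
  else V j

variable {V : ℤ → Fin k → R} {i j s t : ℤ}

lemma artinZ_of_modEq (h : j ≡ i [ZMOD k]) : artinZ i V j = V (j + 1) := if_pos h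

lemma artinZ_of_not_modEq (h : ¬j ≡ i [ZMOD k]) (h' : ¬j ≡ i + 1 [ZMOD k]) :
    artinZ i V j = V j := by
  rw [artinZ, if_neg h, if_neg h']

lemma artinZ_add_one (hk : 2 ≤ k) (h : j ≡ i [ZMOD k]) :
    artinZ i V (j + 1) = leadForm V (j + 1) (V j) • V (j + 1) - minor V (j + 1) • V j := by
  have hne : ¬j + 1 ≡ i [ZMOD k] := fun h' =>
    not_modEq_of_lt_of_lt (k := k) (by omega) (by omega) (h'.trans h.symm)
  rw [artinZ, if_neg hne, if_pos (h.add_right 1), add_sub_cancel_right]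

lemma artinZ_add_one_eq_neg_arcMeet (hk : 2 ≤ k) (h : j ≡ i [ZMOD k]) :
    artinZ i V (j + 1) = -arcMeet V j 2 := by
  rw [artinZ_add_one hk h, arcMeet_succ, arcMeet_one, Nat.cast_one, omitMinor_one]
  module

lemma artinZ_of_lt_of_lt (h : s ≡ i [ZMOD k]) (hs : s + 1 < j) (hj : j < s + k) :
    artinZ i V j = V j :=
  artinZ_of_not_modEq (fun h' => not_modEq_of_lt_of_lt (by omega) hj (h'.trans h.symm))
    fun h' => not_modEq_of_lt_of_lt hs (by omega) (h'.trans (h.add_right 1).symm)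

lemma minor_add_two_eq_leadForm_artinZ (hk : 2 ≤ k) (h : s ≡ i [ZMOD k]) :
    minor V (s + 2) = (-1) ^ k * leadForm (artinZ i V) (s + 1) (V (s + k)) := by
  let q : Fin k := ⟨k - 2, by omega⟩
  have hcycle : update (block (artinZ i V) (s + 1)) 0 (V (s + k)) ∘ q.cycleRange =
      block V (s + 2) := by
    funext b
    rcases lt_trichotomy b q with hb | rfl | hb
    · have hval := Fin.coe_cycleRange_of_lt hb
      have hbq : (b : ℕ) < k - 2 := hb
      have hne : q.cycleRange b ≠ 0 := Fin.val_ne_zero_iff.1 (by omega)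
      rw [comp_apply, update_of_ne hne, block, block, hval,
        artinZ_of_lt_of_lt h (by omega) (by omega)]
      exact congrArg V (by push_cast; ring)
    · rw [comp_apply, Fin.cycleRange_self, update_self]
      exact congrArg V (by simp only [q]; omega)
    · have hbq : k - 2 < (b : ℕ) := hb
      have hne : b ≠ 0 := Fin.val_ne_zero_iff.1 (by omega)
      rw [comp_apply, Fin.cycleRange_of_gt hb, update_of_ne hne, block, block,
        artinZ_of_modEq (by rw [show s + 1 + (b : ℕ) = s + k by omega]; simpa using h)]
      exact congrArg V (by ring)
  have hsign : (-1 : R) ^ (k - 2) = (-1) ^ k := by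
    rw [← Nat.sub_add_cancel hk, pow_add]
    simp
  rw [minor, ← hcycle, AlternatingMap.map_perm, Fin.sign_cycleRange, Units.smul_def, zsmul_eq_mul,
    ← hsign]
  push_cast
  rfl

lemma minor_artinZ_add_one (hk : 2 ≤ k) (h : s ≡ i [ZMOD k]) :
    minor (artinZ i V) (s + 1) = minor V s * minor V (s + 2) := by
  have hspan : arcSpan V (s + 2) (s + k) ≤ LinearMap.ker (leadForm (artinZ i V) (s + 1)) := by
    refine le_trans (arcSpan_le_iff.2 fun j hj hj' => ?_) (arcSpan_le_ker_leadForm _ _)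
    rw [← artinZ_of_lt_of_lt (V := V) h (by omega) hj']
    exact apply_mem_arcSpan (by omega) (by omega)
  have hmeet := hspan (arcMeet_add_mem_arcSpan (V := V) (s := s) hk)
  rw [LinearMap.mem_ker, map_add, map_smul, omitMinor_self, smul_eq_mul] at hmeet
  rw [← leadForm_apply_self, artinZ_add_one_eq_neg_arcMeet hk h, map_neg,
    minor_add_two_eq_leadForm_artinZ hk h]
  linear_combination -hmeet

lemma minor_artinZ (hs : s ≡ i [ZMOD k]) (hts : t ≤ s) (hst : s + 1 < t + k) :
    minor (artinZ i V) t = minor V (s + 1) * minor V t := by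
  obtain ⟨p, hp⟩ := exists_fin_add_eq hts (by omega : s < t + k)
  obtain ⟨q, hq⟩ := exists_fin_add_eq (by omega : t ≤ s + 1) hst
  have hpq : p ≠ q := by rintro rfl; omega
  have hblock : block (artinZ i V) t = update (update (block V t) p (block V t q)) q
      (leadForm V (s + 1) (V s) • block V t q - minor V (s + 1) • block V t p) := by
    funext b
    rcases eq_or_ne b q with rfl | hbq
    · simp [block, hp, hq, artinZ_add_one (by omega) hs]
    rcases eq_or_ne b p with rfl | hbp
    · simp [block, hp, hq, hpq, artinZ_of_modEq hs]
    have hbp' : (b : ℕ) ≠ p := Fin.val_ne_iff.2 hbp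
    have hbq' : (b : ℕ) ≠ q := Fin.val_ne_iff.2 hbq
    rw [update_of_ne hbq, update_of_ne hbp]
    rcases lt_or_ge (t + (b : ℕ)) s with hlt | hge
    · exact artinZ_of_lt_of_lt (s := s - k) (by simpa using hs) (by omega) (by omega)
    · exact artinZ_of_lt_of_lt hs (by omega) (by omega)
  rw [minor, hblock, map_update_update_smul_sub_smul _ _ hpq]
  rfl

end Artin

section UnitValues

/-- The elements of the ring `R` that come from the group `G` of units; in the application these
are the Laurent monomials in the frozen minors, up to sign. -/
def unitValues (G : Subgroup Rˣ) : Submonoid R := G.toSubmonoid.map (Units.coeHom R)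

variable {G : Subgroup Rˣ} {M : Type*} [AddCommGroup M] [Module R M] {a b : R} {x y : M}

lemma isUnit_of_mem_unitValues (ha : a ∈ unitValues G) : IsUnit a := by
  obtain ⟨u, -, rfl⟩ := ha
  exact u.isUnit

lemma neg_one_mem_unitValues (hG : -1 ∈ G) : -1 ∈ unitValues G :=
  ⟨-1, hG, by simp⟩

lemma smul_mem_orbit (ha : a ∈ unitValues G) : a • x ∈ orbit G x := by
  obtain ⟨u, hu, rfl⟩ := ha
  exact ⟨⟨u, hu⟩, rfl⟩

lemma mem_orbit_of_smul_eq_smul (ha : a ∈ unitValues G) (hb : b ∈ unitValues G)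
    (h : a • x = b • y) : x ∈ orbit G y := by
  rw [← orbit_eq_iff, ← orbit_eq_iff.2 (smul_mem_orbit (x := x) ha), h,
    orbit_eq_iff.2 (smul_mem_orbit hb)]

lemma mem_iff_of_mem_orbit {N : Submodule R M} (h : x ∈ orbit G y) : x ∈ N ↔ y ∈ N := by
  obtain ⟨g, rfl⟩ := h
  exact N.smul_mem_iff_of_isUnit (g : Rˣ).isUnit

end UnitValues

/-- Genericity relative to `G`: all frozen minors lie in the group `G` of units. -/
def GenericIn (G : Subgroup Rˣ) (V : ℤ → Fin k → R) : Prop :=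
  ∀ t, minor V t ∈ unitValues G

section ArtinComp

lemma add_natCast_add_one_modEq {a : ℤ} (ha : (k : ℤ) ∣ a) (m : ℕ) :
    a + m + 1 ≡ m + 1 [ZMOD k] := by
  simpa [add_assoc] using ((Int.modEq_zero_iff_dvd.2 ha).add_right (m + 1))

variable [NeZero k]

/-- The composition `σ_m ∘ ⋯ ∘ σ_1` on `ℤ`-indexed configurations. -/
def artinCompZ : ℕ → (ℤ → Fin k → R) → ℤ → Fin k → R
  | 0, V => V
  | m + 1, V => artinZ (m + 1) (artinCompZ m V)

variable {G : Subgroup Rˣ} {V : ℤ → Fin k → R} {a i : ℤ} {m : ℕ}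

lemma GenericIn.artinZ (hV : GenericIn G V) (hk : 2 ≤ k) (i : ℤ) :
    GenericIn G (artinZ i V) := by
  intro t
  obtain ⟨s, hs, hts, hst⟩ : ∃ s, s ≡ i [ZMOD k] ∧ t ≤ s + 1 ∧ s + 1 < t + k :=
    ⟨t + (i + 1 - t) % k - 1, by
        simpa using ((Int.mod_modEq (i + 1 - t) k).add_left t).sub_right 1,
      by have := Int.emod_nonneg (i + 1 - t) (by omega : (k : ℤ) ≠ 0); omega,
      by have := Int.emod_lt_of_pos (i + 1 - t) (by omega : (0 : ℤ) < k); omega⟩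
  rcases hts.eq_or_lt with rfl | hts
  · rw [minor_artinZ_add_one hk hs]
    exact mul_mem (hV _) (hV _)
  · rw [minor_artinZ hs (by omega) hst]
    exact mul_mem (hV _) (hV _)

lemma GenericIn.artinCompZ (hV : GenericIn G V) (hk : 2 ≤ k) (m : ℕ) :
    GenericIn G (artinCompZ m V) := by
  induction m with
  | zero => exact hV
  | succ m ih => exact ih.artinZ hk _

lemma artinCompZ_of_lt (ha : (k : ℤ) ∣ a) (him : a + m + 1 < i) (hi : i ≤ a + k) :
    artinCompZ m V i = V i := by
  induction m with
  | zero => rfl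
  | succ m ih =>
    push_cast at him
    rw [← ih (by omega)]
    exact artinZ_of_lt_of_lt (add_natCast_add_one_modEq ha m) (by omega) (by omega)

lemma artinCompZ_of_le (ha : (k : ℤ) ∣ a) (hm : m < k) (hi : a < i) (him : i ≤ a + m) :
    artinCompZ m V i = V (i + 1) := by
  induction m with
  | zero => omega
  | succ m ih =>
    push_cast at him
    rcases eq_or_lt_of_le him with rfl | him
    · rw [← add_assoc, ← artinCompZ_of_lt (m := m) (V := V) ha (by omega) (by omega)]
      exact artinZ_of_modEq (add_natCast_add_one_modEq ha m)
    · rw [← ih (by omega) (by omega)]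
      refine artinZ_of_lt_of_lt (s := a + m + 1 - k) ?_ (by omega) (by omega)
      simpa using add_natCast_add_one_modEq ha m

-- The one vector lost from the window, `v_{a+k+1}`, is recovered from the meet at `a + k + m + 1`.
lemma arcSpan_le_arcSpan_artinCompZ (hV : GenericIn G V) (ha : (k : ℤ) ∣ a) (hm : m + 1 < k)
    (hmeet : artinCompZ m V (a + k + m + 1) ∈ orbit G (arcMeet V (a + k + 1) (m + 1))) :
    arcSpan V (a + m + 3) (a + k + 2) ≤ arcSpan (artinCompZ m V) (a + m + 3) (a + m + 2 + k) := by
  have hak : (k : ℤ) ∣ a + k := dvd_add_self_right.2 ha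
  set N := arcSpan (artinCompZ m V) (a + m + 3) (a + m + 2 + k)
  refine arcSpan_le_iff.2 fun i hi hik => ?_
  rcases eq_or_lt_of_le (by omega : i ≤ a + k + 1) with rfl | hik
  · have htail : arcSpan V (a + k + 1 + 1) (a + k + 1 + (m + 1 : ℕ)) ≤ N := by
      refine arcSpan_le_iff.2 fun i hi hi' => ?_
      obtain ⟨i, rfl⟩ : ∃ i', i = i' + 1 := ⟨i - 1, by omega⟩
      rw [← artinCompZ_of_le (m := m) (V := V) hak (by omega) (by omega) (by omega)]
      exact apply_mem_arcSpan (by omega) (by omega)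
    have harc : arcMeet V (a + k + 1) (m + 1) ∈ N :=
      (mem_iff_of_mem_orbit hmeet).1 (apply_mem_arcSpan (by omega) (by omega))
    rw [← mem_iff_of_mem_orbit (smul_mem_orbit (hV (a + k + 1 + 1))), ← sub_mem_iff_right _ harc]
    exact htail (arcMeet_sub_mem_arcSpan m.succ_ne_zero)
  · rw [← artinCompZ_of_lt (m := m) (V := V) ha (by omega) (by omega)]
    exact apply_mem_arcSpan (by omega) (by omega)

lemma leadForm_artinCompZ_arcMeet (hV : GenericIn G V) (ha : (k : ℤ) ∣ a) (hm : m + 1 < k)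
    (hmeet : artinCompZ m V (a + k + m + 1) ∈ orbit G (arcMeet V (a + k + 1) (m + 1))) :
    leadForm (artinCompZ m V) (a + m + 2) (arcMeet V (a + 1) (m + 2)) = 0 := by
  refine arcSpan_le_ker_leadForm _ _ (arcSpan_mono (by omega) le_rfl
    (arcSpan_le_arcSpan_artinCompZ hV ha hm hmeet ?_))
  exact arcSpan_mono (by omega) (by omega) (arcMeet_mem_arcSpan (by omega))

lemma artinCompZ_succ_eq_smul_arcMeet (hV : GenericIn G V) (ha : (k : ℤ) ∣ a) (hm : m + 1 < k)
    (hmeet : artinCompZ m V (a + k + m + 1) ∈ orbit G (arcMeet V (a + k + 1) (m + 1)))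
    {u : R} (hu : artinCompZ m V (a + m + 1) = u • arcMeet V (a + 1) (m + 1)) :
    artinCompZ (m + 1) V (a + m + 2) =
      (-1 * u * minor (artinCompZ m V) (a + m + 2)) • arcMeet V (a + 1) (m + 2) := by
  have hnew := artinZ_add_one (V := artinCompZ m V) (by omega) (add_natCast_add_one_modEq ha m)
  have hnext : artinCompZ m V (a + m + 2) = V (a + m + 2) :=
    artinCompZ_of_lt ha (by omega) (by omega)
  have hsucc : arcMeet V (a + 1) (m + 2) =
      arcMeet V (a + 1) (m + 1) + omitMinor V (a + 1) (m + 1) • V (a + m + 2) := by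
    rw [arcMeet_succ]
    congr 3
    push_cast
    ring
  have hlead := leadForm_artinCompZ_arcMeet hV ha hm hmeet
  rw [hsucc, map_add, map_smul, ← hnext, leadForm_apply_self, smul_eq_mul] at hlead
  rw [show a + m + 1 + 1 = a + m + 2 by ring, hu, map_smul, hnext, smul_eq_mul,
    eq_neg_of_add_eq_zero_left hlead] at hnew
  rw [artinCompZ, hnew, hsucc]
  module

lemma artinCompZ_mem_orbit (hG : -1 ∈ G) (hV : GenericIn G V) (ha : (k : ℤ) ∣ a) (hm : m < k) :
    artinCompZ m V (a + m + 1) ∈ orbit G (arcMeet V (a + 1) (m + 1)) := by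
  induction m generalizing a with
  | zero =>
    rw [mem_orbit_symm, zero_add, arcMeet_one, Nat.cast_zero, add_zero]
    exact smul_mem_orbit (hV _)
  | succ m ih =>
    obtain ⟨u, hu⟩ := ih ha (by omega)
    have hnew := artinCompZ_succ_eq_smul_arcMeet hV ha hm
      (ih (dvd_add_self_right.2 ha) (by omega)) (u := ((u : Rˣ) : R)) hu.symm
    rw [show a + (m + 1 : ℕ) + 1 = a + m + 2 by push_cast; ring, hnew]
    exact smul_mem_orbit (mul_mem (mul_mem (neg_one_mem_unitValues hG) ⟨u, u.2, rfl⟩)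
      (hV.artinCompZ (by omega) m _))

end ArtinComp

section Stages

/-- The shape of the configuration `U` reached from `V` after the first `s` factors
`σ_{k-1} ⋯ σ_1`, …, `σ_{k-s} ⋯ σ_1` of the half-twist: in each period, the first `k - s` vectors
are those of `V` shifted by `s`, and the last `s` are already the meets of the final window. -/
structure IsTwistStage (G : Subgroup Rˣ) (V : ℤ → Fin k → R) (s : ℕ) (U : ℤ → Fin k → R) :
    Prop where
  genericIn : GenericIn G U
  apply_eq {a i : ℤ} (ha : (k : ℤ) ∣ a) (hi : a < i) (his : i + s ≤ a + k) : U i = V (i + s)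
  mem_orbit {a : ℤ} {l : ℕ} (ha : (k : ℤ) ∣ a) (hls : k < l + s) (hl : l ≤ k) :
    U (a + l) ∈ orbit G (arcMeet V (a + k + 1 - l) l)

variable {G : Subgroup Rˣ} {U V : ℤ → Fin k → R} {a : ℤ} {m s : ℕ}

lemma GenericIn.isTwistStage_zero (hV : GenericIn G V) : IsTwistStage G V 0 V where
  genericIn := hV
  apply_eq _ _ _ := by simp
  mem_orbit _ hls hl := by omega

namespace IsTwistStage

lemma arcMeet_mem_arcSpan (h : IsTwistStage G V s U) (hs : m + s + 1 = k) (ha : (k : ℤ) ∣ a) :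
    arcMeet U (a + 1) (m + 1) ∈ arcSpan V (a + k + 1) (a + s + 2 + k) := by
  have hle : arcSpan U (a + m + 2) (a + k + 2) ≤ arcSpan V (a + k + 1) (a + s + 2 + k) := by
    refine arcSpan_le_iff.2 fun i hi hi' => ?_
    rcases eq_or_lt_of_le (by omega : i ≤ a + k + 1) with rfl | hik
    · rw [h.apply_eq (dvd_add_self_right.2 ha) (by omega) (by omega)]
      exact apply_mem_arcSpan (by omega) (by omega)
    · obtain ⟨l, rfl⟩ : ∃ l : ℕ, i = a + l := ⟨(i - a).toNat, by omega⟩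
      rw [mem_iff_of_mem_orbit (h.mem_orbit ha (by omega) (by omega))]
      exact arcSpan_mono (by omega) (by omega) (HalfTwist.arcMeet_mem_arcSpan (by omega))
  exact hle (arcSpan_mono (by omega) (by omega) (HalfTwist.arcMeet_mem_arcSpan (by omega)))

lemma arcMeet_sub_mem_arcSpan (h : IsTwistStage G V s U) (hs : m + s + 1 = k)
    (ha : (k : ℤ) ∣ a) :
    arcMeet U (a + 1) (m + 1) - minor U (a + 2) • V (a + s + 1) ∈
      arcSpan V (a + s + 2) (a + k + 1) := by
  have hle : arcSpan U (a + 2) (a + m + 2) ≤ arcSpan V (a + s + 2) (a + k + 1) := by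
    refine arcSpan_le_iff.2 fun i hi hi' => ?_
    rw [h.apply_eq ha (by omega) (by omega)]
    exact apply_mem_arcSpan (by omega) (by omega)
  have hfirst : U (a + 1) = V (a + s + 1) := by
    rw [h.apply_eq ha (by omega) (by omega), add_right_comm]
  rw [← hfirst, show a + 2 = a + 1 + 1 by ring]
  exact hle (arcSpan_mono (by omega) (by omega)
    (HalfTwist.arcMeet_sub_mem_arcSpan (V := U) (s := a + 1) m.succ_ne_zero))

lemma arcMeet_mem_orbit (h : IsTwistStage G V s U) (hV : GenericIn G V) (hs : m + s + 1 = k)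
    (ha : (k : ℤ) ∣ a) :
    arcMeet U (a + 1) (m + 1) ∈ orbit G (arcMeet V (a + s + 1) (m + 1)) :=
  mem_orbit_of_smul_eq_smul (hV _) (h.genericIn _) <|
    smul_eq_smul_arcMeet (isUnit_of_mem_unitValues (hV _)) m.succ_ne_zero (by omega)
      (arcSpan_mono (by omega) (by omega) (h.arcMeet_mem_arcSpan hs ha))
      (arcSpan_mono (by omega) (by omega) (h.arcMeet_sub_mem_arcSpan hs ha))

lemma artinCompZ [NeZero k] (h : IsTwistStage G V s U) (hG : -1 ∈ G) (hV : GenericIn G V)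
    (hk : 2 ≤ k) (hs : m + s + 1 = k) : IsTwistStage G V (s + 1) (artinCompZ m U) where
  genericIn := h.genericIn.artinCompZ hk m
  apply_eq {a i} ha hi his := by
    push_cast at his ⊢
    rw [artinCompZ_of_le ha (by omega) hi (by omega),
      h.apply_eq ha (by omega) (by omega), add_right_comm, add_assoc]
  mem_orbit {a l} ha hls hl := by
    rcases eq_or_lt_of_le (by omega : m + 1 ≤ l) with rfl | hml
    · rw [show a + (m + 1 : ℕ) = a + m + 1 by push_cast; ring,
        show a + k + 1 - (m + 1 : ℕ) = a + s + 1 by omega,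
        ← orbit_eq_iff.2 (h.arcMeet_mem_orbit hV hs ha)]
      exact artinCompZ_mem_orbit hG h.genericIn ha (by omega)
    · rw [artinCompZ_of_lt ha (by omega) (by omega)]
      exact h.mem_orbit ha (by omega) hl

end IsTwistStage

variable [NeZero k]

/-- The half-twist `σ_1 ∘ (σ_2 ∘ σ_1) ∘ ⋯ ∘ (σ_m ∘ ⋯ ∘ σ_1)` on `ℤ`-indexed configurations. -/
def halfTwistZ : ℕ → (ℤ → Fin k → R) → ℤ → Fin k → R
  | 0, V => V
  | m + 1, V => halfTwistZ m (artinCompZ (m + 1) V)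

lemma IsTwistStage.halfTwistZ (h : IsTwistStage G V s U) (hG : -1 ∈ G) (hV : GenericIn G V)
    (hk : 2 ≤ k) (hs : m + s + 1 = k) : IsTwistStage G V (k - 1) (halfTwistZ m U) := by
  induction m generalizing s U with
  | zero => rwa [show k - 1 = s by omega]
  | succ m ih => exact ih (h.artinCompZ hG hV hk hs) (by omega)

end Stages

section Unroll

variable {n : ℕ} {Ω : Type*}

/-- A family of cyclic configurations as one periodic `ℤ`-indexed configuration over the ring
`Ω → ℂ` of functions on the parameter space. -/
def unroll (X : Ω → ZMod n → Fin k → ℂ) : ℤ → Fin k → Ω → ℂ := fun z t ω => X ω z t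

variable (X : Ω → ZMod n → Fin k → ℂ)

lemma detRowAlternating_apply_eq_colDet (c : Fin k → Fin k → Ω → ℂ) (ω : Ω) :
    Matrix.detRowAlternating c ω = colDet fun b t => c b t ω := by
  rw [colDet, ← Matrix.det_transpose]
  exact RingHom.map_det (Pi.evalRingHom (fun _ => ℂ) ω) c

lemma minor_unroll (z : ℤ) (ω : Ω) : minor (unroll X) z ω = frozen k n (X ω) z := by
  rw [minor, detRowAlternating_apply_eq_colDet, frozen]
  simp [block, unroll]

lemma leadForm_unroll [NeZero k] (z : ℤ) (ω : Ω) :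
    leadForm (unroll X) z (unroll X (z - 1)) ω =
      colDet fun b : Fin k =>
        if (b : ℕ) = 0 then X ω (z - 1) else X ω (z + ((b : ℕ) : ZMod n)) := by
  refine (detRowAlternating_apply_eq_colDet _ ω).trans (congrArg colDet ?_)
  funext b t
  rcases eq_or_ne b 0 with rfl | hb
  · simp [unroll]
  · simp [unroll, block, hb, Fin.val_ne_zero_iff.2 hb]

lemma val_intCast_mod_eq_iff [NeZero n] (hkn : k ∣ n) (z : ℤ) (i : ℕ) :
    (z : ZMod n).val % k = i % k ↔ z ≡ i [ZMOD k] := by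
  rw [Int.ModEq, ← Int.emod_emod_of_dvd z (Int.natCast_dvd_natCast.2 hkn),
    ← ZMod.val_intCast (n := n)]
  norm_cast

lemma exists_intCast_add_eq [NeZero k] (j : ZMod n) :
    ∃ (a : ℤ) (l : ℕ), (k : ℤ) ∣ a ∧ 1 ≤ l ∧ l ≤ k ∧ ((a + l : ℤ) : ZMod n) = j := by
  obtain ⟨z, rfl⟩ := ZMod.intCast_surjective j
  have hnonneg := Int.emod_nonneg (z - 1) (NeZero.ne (k : ℤ))
  have hlt := Int.emod_lt_of_pos (z - 1) (Int.natCast_pos.2 (NeZero.pos k))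
  have hdiv := Int.mul_ediv_add_emod (z - 1) k
  refine ⟨k * ((z - 1) / k), ((z - 1) % k).toNat + 1, dvd_mul_right _ _, by omega, by omega, ?_⟩
  congr 1
  push_cast
  rw [Int.toNat_of_nonneg hnonneg]
  linarith

variable [NeZero k] [NeZero n]

lemma artinZ_unroll (hkn : k ∣ n) (i : ℕ) :
    artinZ i (unroll X) = unroll fun ω => artin k n i (X ω) := by
  funext z t ω
  have hsucc : z ≡ (i : ℤ) + 1 [ZMOD k] ↔ z ≡ (i + 1 : ℕ) [ZMOD k] := by push_cast; rfl
  simp only [artinZ, hsucc, ← val_intCast_mod_eq_iff hkn]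
  simp only [unroll, artin]
  split_ifs
  · simp [unroll]
  · have hpred : unroll X (z - 1) t ω = X ω (z - 1) t := by simp [unroll]
    simp only [Pi.sub_apply, Pi.smul_apply, Pi.mul_apply, smul_eq_mul, leadForm_unroll,
      minor_unroll, hpred]
    rfl
  · rfl

lemma artinCompZ_unroll (hkn : k ∣ n) (m : ℕ) :
    artinCompZ m (unroll X) = unroll fun ω => artinComp k n m (X ω) := by
  induction m with
  | zero => rfl
  | succ m ih =>
    rw [artinCompZ, ih]
    exact_mod_cast artinZ_unroll _ hkn (m + 1)

lemma halfTwistZ_unroll (hkn : k ∣ n) (m : ℕ) :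
    halfTwistZ m (unroll X) = unroll fun ω => halfTwist k n m (X ω) := by
  induction m generalizing X with
  | zero => rfl
  | succ m ih => rw [halfTwistZ, artinCompZ_unroll X hkn, ih]; rfl

end Unroll

section Window

variable {n : ℕ} {Ω : Type*} (X : Ω → ZMod n → Fin k → ℂ)

lemma omitMinor_unroll (s : ℤ) (i : ℕ) (ω : Ω) :
    omitMinor (unroll X) s i ω = (-1) ^ i * colDet fun c : Fin k =>
      if (c : ℕ) < i then X ω ((s + (c : ℕ) : ℤ) : ZMod n)
      else X ω ((s + (c : ℕ) + 1 : ℤ) : ZMod n) := by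
  rw [omitMinor, Pi.mul_apply, detRowAlternating_apply_eq_colDet]
  congr 2
  funext c
  split_ifs <;> rfl

lemma gcMeet_eq_arcMeet_unroll {s : ℤ} {p q : ℕ} (hp : 1 ≤ p) (hpq : p + q = k + 1) (ω : Ω)
    (t : Fin k) :
    gcMeet (fun m : Fin p => X ω ((s + (m : ℕ) : ℤ) : ZMod n))
        (fun m : Fin q => X ω ((s + p + (m : ℕ) : ℤ) : ZMod n)) t =
      ((-1 : Ω → ℂ) ^ (p - 1) • arcMeet (unroll X) s p) t ω := by
  rw [gcMeet, arcMeet, Finset.sum_range, Finset.smul_sum, Finset.sum_apply, Finset.sum_apply,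
    Finset.sum_apply]
  refine Finset.sum_congr rfl fun i _ => ?_
  have hsign : (-1 : ℂ) ^ (p - 1 - (i : ℕ)) = (-1) ^ (p - 1) * (-1) ^ (i : ℕ) := by
    obtain ⟨d, hd⟩ := Nat.exists_eq_add_of_le (by omega : (i : ℕ) ≤ p - 1)
    rw [hd, add_tsub_cancel_left, pow_add, mul_right_comm, ← mul_pow]
    simp
  simp only [Pi.smul_apply, Pi.mul_apply, smul_eq_mul, omitMinor_unroll, hsign, mul_assoc]
  congr 3
  refine congrArg colDet (funext fun c => ?_)
  split_ifs <;> first | (exfalso; omega) | (congr 2 <;> omega)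

variable [NeZero n] {a : ℤ} {l : ℕ}

lemma unroll_Wmap_first (hk : 2 ≤ k) (hkn : k ∣ n) (ha : (k : ℤ) ∣ a) :
    unroll (fun ω => Wmap k n (X ω)) (a + 1) = unroll X (a + k) := by
  have h : ((a + 1 : ℤ) : ZMod n).val % k = 1 % k :=
    (val_intCast_mod_eq_iff hkn _ _).2 (by simpa using (Int.modEq_zero_iff_dvd.2 ha).add_right 1)
  funext t ω
  rw [unroll, Wmap, if_pos h, unroll, ← Int.cast_natCast, ← Int.cast_add]
  congr 2
  omega

lemma unroll_Wmap_last (hk : 2 ≤ k) (hkn : k ∣ n) (ha : (k : ℤ) ∣ a) :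
    unroll (fun ω => Wmap k n (X ω)) (a + k) = unroll X (a + k + 1) := by
  have h : ((a + k : ℤ) : ZMod n).val % k = k % k :=
    (val_intCast_mod_eq_iff hkn _ _).2 (by simpa using (Int.modEq_zero_iff_dvd.2 ha).add_right k)
  rw [Nat.mod_self] at h
  funext t ω
  rw [unroll, Wmap, if_neg (by rw [h, Nat.mod_eq_of_lt hk]; exact zero_ne_one), if_pos h, unroll,
    Int.cast_add _ 1, Int.cast_one]

lemma unroll_Wmap_meet (hkn : k ∣ n) (ha : (k : ℤ) ∣ a) (hl : 1 < l) (hlk : l < k) :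
    unroll (fun ω => Wmap k n (X ω)) (a + l) =
      (-1 : Ω → ℂ) ^ (l - 1) • arcMeet (unroll X) (a + k + 1 - l) l := by
  have h : ((a + l : ℤ) : ZMod n).val % k = l :=
    ((val_intCast_mod_eq_iff hkn _ _).2
      (by simpa using (Int.modEq_zero_iff_dvd.2 ha).add_right l)).trans (Nat.mod_eq_of_lt hlk)
  funext t ω
  rw [← gcMeet_eq_arcMeet_unroll X (q := k + 1 - l) hl.le (by omega), unroll, Wmap,
    if_neg (by rw [h, Nat.mod_eq_of_lt (hl.trans hlk)]; exact hl.ne'),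
    if_neg (by rw [h]; omega), h]
  refine congrFun (congrArg₂ gcMeet (funext fun m => congrArg (X ω) ?_)
    (funext fun m => congrArg (X ω) ?_)) t <;>
  · push_cast [Nat.cast_sub hlk.le]
    ring

lemma arcMeet_unroll_mem_orbit {G : Subgroup (Ω → ℂ)ˣ} (hG : -1 ∈ G) (hX : GenericIn G (unroll X))
    (hk : 2 ≤ k) (hkn : k ∣ n) (ha : (k : ℤ) ∣ a) (hl : 1 ≤ l) (hlk : l ≤ k) :
    arcMeet (unroll X) (a + k + 1 - l) l ∈
      orbit G (unroll (fun ω => Wmap k n (X ω)) (a + l)) := by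
  have hsign (m : ℕ) : (-1 : Ω → ℂ) ^ m ∈ unitValues G :=
    pow_mem (neg_one_mem_unitValues hG) m
  rcases hl.eq_or_lt with rfl | hl
  · rw [Nat.cast_one, unroll_Wmap_first X hk hkn ha, add_sub_cancel_right, arcMeet_one]
    exact smul_mem_orbit (hX _)
  rcases hlk.eq_or_lt with rfl | hlk
  · have h := arcMeet_eq_zero (unroll X) (a + 1)
    rw [arcMeet_succ, add_eq_zero_iff_eq_neg, ← neg_smul, omitMinor_self] at h
    rw [unroll_Wmap_last X hk hkn ha, show a + l + 1 - l = a + 1 by ring, h,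
      show a + 1 + l = a + l + 1 by ring, ← neg_one_mul, ← mul_assoc, ← pow_succ']
    exact smul_mem_orbit (mul_mem (hsign _) (hX _))
  · rw [mem_orbit_symm, unroll_Wmap_meet X hkn ha hl hlk]
    exact smul_mem_orbit (hsign _)

end Window

section Laurent

variable {k n : ℕ} {v : ZMod n → Fin k → ℂ}

lemma laurent_zero : laurent k n 0 v = 1 := by
  simp [laurent]

lemma exists_laurent_eq_frozen [NeZero n] (m : ZMod n) :
    ∃ e, ∀ v, laurent k n e v = frozen k n v m := by
  let i : Fin n := ⟨m.val, m.val_lt⟩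
  refine ⟨Pi.single i 1, fun v => ?_⟩
  rw [laurent, Finset.prod_eq_single i]
  · simp [i]
  · intro b _ hb
    rw [Pi.single_eq_of_ne hb, zpow_zero]
  · simp

lemma laurent_add (hv : Generic k n v) (e e' : Fin n → ℤ) :
    laurent k n (e + e') v = laurent k n e v * laurent k n e' v := by
  simp only [laurent, ← Finset.prod_mul_distrib, Pi.add_apply]
  exact Finset.prod_congr rfl fun m _ => zpow_add₀ (hv _) _ _

lemma laurent_neg (e : Fin n → ℤ) : laurent k n (-e) v = (laurent k n e v)⁻¹ := by
  simp [laurent, zpow_neg]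

/-- The parameter space over which the argument runs uniformly in the configuration. -/
abbrev GenericConfig (k n : ℕ) := {v : ZMod n → Fin k → ℂ // Generic k n v}

/-- The Laurent monomials in the frozen minors, up to sign, as a group of units of the ring of
functions on generic configurations: equality up to this group has sign and exponents
independent of the configuration. -/
def laurentUnits (k n : ℕ) : Subgroup (GenericConfig k n → ℂ)ˣ where
  carrier := {u | ∃ (ε : ℂ) (e : Fin n → ℤ), (ε = 1 ∨ ε = -1) ∧
    ∀ v, (u : GenericConfig k n → ℂ) v = ε * laurent k n e v.1}
  one_mem' := ⟨1, 0, Or.inl rfl, fun v => by simp [laurent_zero]⟩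
  mul_mem' := by
    rintro a b ⟨ε, e, hε, h⟩ ⟨ε', e', hε', h'⟩
    refine ⟨ε * ε', e + e', ?_, fun v => ?_⟩
    · rcases hε with rfl | rfl <;> rcases hε' with rfl | rfl <;> simp
    · rw [Units.val_mul, Pi.mul_apply, h, h', laurent_add v.2, mul_mul_mul_comm]
  inv_mem' := by
    rintro a ⟨ε, e, hε, h⟩
    refine ⟨ε, -e, hε, fun v => ?_⟩
    have hinv : ((a⁻¹ : (_ → ℂ)ˣ) : _ → ℂ) v * (a : _ → ℂ) v = 1 := congrFun a.inv_mul v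
    rw [eq_inv_of_mul_eq_one_left hinv, h, laurent_neg, mul_inv]
    rcases hε with rfl | rfl <;> norm_num

lemma neg_one_mem_laurentUnits : -1 ∈ laurentUnits k n :=
  ⟨-1, 0, Or.inr rfl, fun v => by simp [laurent_zero]⟩

lemma genericIn_laurentUnits [NeZero n] :
    GenericIn (laurentUnits k n) (unroll fun v : GenericConfig k n => v.1) := by
  intro z
  obtain ⟨e, he⟩ := exists_laurent_eq_frozen (k := k) (z : ZMod n)
  have hunit : IsUnit (minor (unroll fun v : GenericConfig k n => v.1) z) :=
    Pi.isUnit_iff.2 fun v => (minor_unroll Subtype.val z v).symm ▸ (v.2 _).isUnit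
  obtain ⟨u, hu⟩ := hunit
  exact ⟨u, ⟨1, e, Or.inl rfl, fun v => by rw [hu, minor_unroll, he, one_mul]⟩, hu⟩

lemma exists_eq_laurent_smul {F F' : (ZMod n → Fin k → ℂ) → ZMod n → Fin k → ℂ} {z : ℤ}
    (h : unroll (fun v : GenericConfig k n => F v) z ∈
      orbit (laurentUnits k n) (unroll (fun v : GenericConfig k n => F' v) z)) :
    ∃ (ε : ℂ) (e : Fin n → ℤ), (ε = 1 ∨ ε = -1) ∧
      ∀ v, Generic k n v → F v z = (ε * laurent k n e v) • F' v z := by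
  obtain ⟨⟨u, ε, e, hε, hu⟩, h⟩ := h
  refine ⟨ε, e, hε, fun v hv => funext fun t => ?_⟩
  rw [← hu ⟨v, hv⟩]
  exact (congrFun (congrFun h t) ⟨v, hv⟩).symm

end Laurent

end HalfTwist

/-- At `l = 1` and `l = k` the meet is a multiple of `v_{a+k}` and `v_{a+k+1}` respectively, the
two ends of the window. -/
theorem half_twist_window_formula_general {R : Type*} [CommRing R] {k : ℕ} [NeZero k] (hk : 2 ≤ k)
    {G : Subgroup Rˣ} (hG : -1 ∈ G) {V : ℤ → Fin k → R} (hV : HalfTwist.GenericIn G V) {a : ℤ}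
    (ha : (k : ℤ) ∣ a) {l : ℕ} (hl : 1 ≤ l) (hlk : l ≤ k) :
    HalfTwist.halfTwistZ (k - 1) V (a + l) ∈
      MulAction.orbit G (HalfTwist.arcMeet V (a + k + 1 - l) l) := by
  have h := hV.isTwistStage_zero.halfTwistZ (m := k - 1) hG hV hk (by omega)
  rcases hl.eq_or_lt with rfl | hl
  · rw [h.apply_eq ha (by omega) (by omega), HalfTwist.arcMeet_one, MulAction.mem_orbit_symm,
      show a + k + 1 - (1 : ℕ) = a + (1 : ℕ) + (k - 1 : ℕ) by omega]
    exact HalfTwist.smul_mem_orbit (hV _)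
  · exact h.mem_orbit ha (by omega) hlk

/-- Half-twist window formula (first part of Proposition 8.1): the half-twist
composition of Artin generators agrees componentwise with `W`, up to signs and
Laurent monomials in the frozen minors. -/
theorem half_twist_window_formula
    (k r n : ℕ) (hk : 2 ≤ k) (hr : 2 ≤ r) (hn : n = r * k) (j : ZMod n) :
    ∃ (ε : ℂ) (e : Fin n → ℤ), (ε = 1 ∨ ε = -1) ∧
      ∀ v : ZMod n → Fin k → ℂ, Generic k n v →
        halfTwist k n (k - 1) v j = (ε * laurent k n e v) • Wmap k n v j := by
  have : NeZero k := ⟨by omega⟩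
  have : NeZero n := ⟨by rw [hn]; positivity⟩
  have hkn : k ∣ n := Dvd.intro_left r hn.symm
  obtain ⟨a, l, ha, hl, hlk, rfl⟩ := HalfTwist.exists_intCast_add_eq (k := k) j
  have hX := HalfTwist.genericIn_laurentUnits (k := k) (n := n)
  have htwist := half_twist_window_formula_general hk HalfTwist.neg_one_mem_laurentUnits hX
    ha hl hlk
  have hwindow := HalfTwist.arcMeet_unroll_mem_orbit _ HalfTwist.neg_one_mem_laurentUnits hX hk
    hkn ha hl hlk
  rw [HalfTwist.halfTwistZ_unroll _ hkn, MulAction.orbit_eq_iff.2 hwindow] at htwist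
  exact HalfTwist.exists_eq_laurent_smul htwist

end
end
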